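/- arXiv:2011.14815 — 2 statements merged into one kernel-verified Lean document; each statement's English description precedes it below -/
import Mathlib

section
/- Let R be a Noetherian ring of prime characteristic p > 0 and f, g ∈ R a regular sequence. For q = p^e, consider the directed system (f^{q+1}, g^{q+1})/((fg)^q, f^{q+p}, g^{q+p}) with transition maps multiplication by (fg)^{qp−q}. Then each term decomposes as a direct sum Ru₁ ⊕ Ru₂ where u₁ = class of f^{q+1} has annihilator (g^q, f^{p−1}) and u₂ = class of g^{q+1} has annihilator (f^q, g^{p−1}); consequently the direct limit is isomorphic to H^1_g(R/f^{p−1}) ⊕ H^1_f(R/g^{p−1}). -/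
/-!
Write `q = p ^ e`, `m = p - 1`, and let `u₁`, `u₂` be the classes of `f ^ (q + 1)`, `g ^ (q + 1)`.
Since `f, g` is a regular sequence, `g` is a nonzerodivisor modulo powers of `f` and vice versa.
Cancelling powers of `f` and `g` in a relation `a f ^ (q + 1) + b g ^ (q + 1) ∈ ((fg)^q, f^(q+p),
g^(q+p))` shows that it holds exactly when `a ∈ (g ^ q, f ^ m)` and `b ∈ (f ^ q, g ^ m)`
(`mul_add_mul_mem_iff`). This gives the annihilators of `u₁` and `u₂` and the directness of the sum.

For the limit, let `x` be a nonzerodivisor on `M`. The sequence `0 → M → M_x → M_x / M → 0` yields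
`Ext¹(R/xⁿ, M) ≅ Hom(R/xⁿ, M_x / M)`, as `xⁿ` kills `R/xⁿ` and is invertible on `M_x`. The
isomorphism is the inverse of a connecting map. It is constructed on projective resolutions, where
its naturality in `R/xⁿ` is visible (`SnakeRel`, `exists_extHom`). As `M_x / M` is the union of its
`xⁿ`-torsion submodules, passing to the colimit over `n` gives `H¹_x(M) ≅ M_x / M`
(`localCohomology_one_equiv`).

With `M = R / f ^ m` and `x = g`, the fraction `a / g ^ q` is zero in `M_x / M` exactly when
`a ∈ (g ^ q, f ^ m)`, and symmetrically with `f` and `g` exchanged. Hence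
`a u₁ + b u₂ ↦ (a / g ^ q, b / f ^ q)` embeds each term of the directed system in the product of the
two quotients. The transition maps send `a u₁ + b u₂` to `a g^k u₁ + b f^k u₂`, where `k` is the
increase of `q`, so these embeddings are compatible; they are jointly onto because `p ^ e` is
unbounded.
-/

section

variable {R : Type} [CommRing R] (p : ℕ) (f g : R)

/-- The denominator ideal `((fg)^q, f^{q+p}, g^{q+p})` with `q = p^e`. -/
def Dideal (e : ℕ) : Ideal R :=
  Ideal.span {(f * g) ^ p ^ e, f ^ (p ^ e + p), g ^ (p ^ e + p)}

/-- The module `(f^{q+1}, g^{q+1})/((fg)^q, f^{q+p}, g^{q+p})`, realized as the image of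
the ideal `(f^{q+1}, g^{q+1})` in `R/((fg)^q, f^{q+p}, g^{q+p})`, with `q = p^e`. -/
def Nmod (e : ℕ) : Submodule R (R ⧸ Dideal p f g e) :=
  Submodule.map (Dideal p f g e).mkQ (Ideal.span {f ^ (p ^ e + 1), g ^ (p ^ e + 1)})

end

/-! ### Naturality of `Ext¹` computed on projective resolutions -/

section
open CategoryTheory Limits Opposite

variable {R : Type} [CommRing R] {X Y : ModuleCat.{0} R} (M : ModuleCat.{0} R)
  (P : ProjectiveResolution X) (Q : ProjectiveResolution Y)

/-- The map `Hom(Q, M) ⟶ Hom(P, M)` of cochain complexes given by precomposition with `h`. -/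
noncomputable def yonedaMap {P Q : ChainComplex (ModuleCat.{0} R) ℕ} (h : P ⟶ Q) :
    Q.linearYonedaObj R M ⟶ P.linearYonedaObj R M :=
  (HomologicalComplex.unopFunctor _ _).map
    ((((linearYoneda R (ModuleCat.{0} R)).obj M).rightOp.mapHomologicalComplex _).map h).op

lemma homologyUnop_nat {V : Type*} [Category V] [Abelian V] {c : ComplexShape ℕ}
   {K L : HomologicalComplex Vᵒᵖ c} (φ : K ⟶ L) (i : ℕ) :
   (HomologicalComplex.homologyMap φ i).unop ≫ (HomologicalComplex.homologyUnop K i).inv =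
   (HomologicalComplex.homologyUnop L i).inv ≫
    HomologicalComplex.homologyMap ((HomologicalComplex.unopFunctor _ _).map φ.op) i := by
  have h := congrArg Quiver.Hom.unop (HomologicalComplex.homologyOp_hom_naturality ((HomologicalComplex.unopFunctor _ _).map φ.op) i)
  refine (Iso.comp_inv_eq (K.homologyUnop i)).2 ?_
  refine Eq.trans ?_ (Category.assoc _ _ _).symm
  exact (Iso.eq_inv_comp (L.homologyUnop i)).2 h

/-- The isomorphism between `Extⁿ(X, M)` and the cohomology of `Hom(P, M)` is natural in `X`, along
any chain map `h` lifting `f` (only compatibility in degree `0` is needed). -/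
lemma isoExt_naturality (f : X ⟶ Y) (h : P.complex ⟶ Q.complex)
    (comm : h.f 0 ≫ Q.π.f 0 = P.π.f 0 ≫ f) (n : ℕ) :
    ((Ext R (ModuleCat.{0} R) n).map f.op).app M ≫ (P.isoExt n M).hom =
      (Q.isoExt n M).hom ≫ HomologicalComplex.homologyMap (yonedaMap M h) n := by
  have := ProjectiveResolution.isoLeftDerivedObj_inv_naturality f P Q h comm
    ((linearYoneda R (ModuleCat.{0} R)).obj M).rightOp n
  have h2 := congrArg Quiver.Hom.unop this
  have h3 := homologyUnop_nat ((((linearYoneda R (ModuleCat.{0} R)).obj M).rightOp.mapHomologicalComplex _).map h) n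
  have e1 : ((Ext R (ModuleCat.{0} R) n).map f.op).app M =
     ((((linearYoneda R (ModuleCat.{0} R)).obj M).rightOp.leftDerived n).map f).unop := rfl
  rw [e1]
  simp only [unop_comp] at h2
  have h4 := reassoc_of% h2
  refine (h4 (HomologicalComplex.homologyUnop _ _).inv).trans ?_
  refine (congrArg (fun t => _ ≫ t) h3).trans (Category.assoc _ _ _).symm

/-- The cocycle `φ : P₁ ⟶ M` represents the class `c ∈ Ext¹(X, M)`. The relation is used in place of
a map because `c` determines `φ` only up to a coboundary. -/
def ExtRep (c : ((Ext R (ModuleCat.{0} R) 1).obj (op X)).obj M) (φ : P.complex.X 1 ⟶ M) : Prop :=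
  ∃ z : ((P.complex.linearYonedaObj R M).cycles 1 : ModuleCat R),
    (P.complex.linearYonedaObj R M).homologyπ 1 z = (P.isoExt 1 M).hom c ∧
    (P.complex.linearYonedaObj R M).iCycles 1 z = φ

variable {M P Q}

lemma ExtRep.exists (c : ((Ext R (ModuleCat.{0} R) 1).obj (op X)).obj M) :
    ∃ φ, ExtRep M P c φ := by
  obtain ⟨z, hz⟩ := (ModuleCat.epi_iff_surjective
    ((P.complex.linearYonedaObj R M).homologyπ 1)).1 inferInstance ((P.isoExt 1 M).hom c)
  exact ⟨_, z, hz, rfl⟩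

lemma ExtRep.exists_of_comp_eq_zero (φ : P.complex.X 1 ⟶ M) (hφ : P.complex.d 2 1 ≫ φ = 0) :
    ∃ c, ExtRep M P c φ := by
  have h := (P.complex.linearYonedaObj R M).cyclesIsKernel 1 2 (by simp)
  -- Elements of the module of cocycles are obtained from maps out of the free module of rank one.
  let k : ModuleCat.of R R ⟶ (P.complex.linearYonedaObj R M).X 1 :=
    ModuleCat.ofHom (LinearMap.toSpanSingleton R (P.complex.X 1 ⟶ M) φ)
  have hk : k ≫ (P.complex.linearYonedaObj R M).d 1 2 = 0 := by
    ext
    change P.complex.d 2 1 ≫ ((1 : R) • φ) = 0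
    rw [one_smul, hφ]
  let z := (P.complex.linearYonedaObj R M).liftCycles k 2 (by simp) hk (1 : R)
  refine ⟨(P.isoExt 1 M).inv ((P.complex.linearYonedaObj R M).homologyπ 1 z), z, ?_, ?_⟩
  · simp
  · have := (P.complex.linearYonedaObj R M).liftCycles_i k 2 (by simp) hk
    have h2 := ConcreteCategory.congr_hom this (1 : R)
    refine h2.trans ?_
    change (1 : R) • φ = φ
    rw [one_smul]

lemma ExtRep.comp_eq_zero {c : ((Ext R (ModuleCat.{0} R) 1).obj (op X)).obj M}
    {φ : P.complex.X 1 ⟶ M} (h : ExtRep M P c φ) : P.complex.d 2 1 ≫ φ = 0 := by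
  obtain ⟨z, -, rfl⟩ := h
  exact ConcreteCategory.congr_hom ((P.complex.linearYonedaObj R M).iCycles_d 1 2) z

lemma ExtRep.add {c c' : ((Ext R (ModuleCat.{0} R) 1).obj (op X)).obj M}
    {φ φ' : P.complex.X 1 ⟶ M} (h : ExtRep M P c φ) (h' : ExtRep M P c' φ') :
    ExtRep M P (c + c') (φ + φ') := by
  obtain ⟨z, hz, rfl⟩ := h
  obtain ⟨z', hz', rfl⟩ := h'
  exact ⟨z + z', by rw [map_add, map_add, hz, hz'], map_add _ _ _⟩

lemma ExtRep.smul {c : ((Ext R (ModuleCat.{0} R) 1).obj (op X)).obj M}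
    {φ : P.complex.X 1 ⟶ M} (h : ExtRep M P c φ) (r : R) :
    ExtRep M P (r • c) (r • φ) := by
  obtain ⟨z, hz, rfl⟩ := h
  exact ⟨r • z, by rw [map_smul, map_smul, hz], map_smul _ _ _⟩

lemma ExtRep.eq_zero_iff {c : ((Ext R (ModuleCat.{0} R) 1).obj (op X)).obj M}
    {φ : P.complex.X 1 ⟶ M} (h : ExtRep M P c φ) :
    c = 0 ↔ ∃ ψ : P.complex.X 0 ⟶ M, P.complex.d 1 0 ≫ ψ = φ := by
  obtain ⟨z, hz, rfl⟩ := h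
  let K := P.complex.linearYonedaObj R M
  have hex : (ShortComplex.mk (K.toCycles 0 1) (K.homologyπ 1) (by simp)).Exact :=
    ShortComplex.exact_of_g_is_cokernel _ (K.homologyIsCokernel 0 1 (by simp))
  rw [ShortComplex.ShortExact.moduleCat_exact_iff_function_exact] at hex
  have h1 : c = 0 ↔ (P.isoExt 1 M).hom c = 0 := by
    refine ⟨fun h => by rw [h, map_zero], fun h => ?_⟩
    have := congrArg (P.isoExt 1 M).inv h
    simpa using this
  rw [h1, ← hz]
  refine (hex z).trans ?_
  have hi : Function.Injective (K.iCycles 1) := (ModuleCat.mono_iff_injective _).1 inferInstance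
  have hd : ∀ ψ : P.complex.X 0 ⟶ M, K.iCycles 1 (K.toCycles 0 1 ψ) = P.complex.d 1 0 ≫ ψ :=
    fun ψ => ConcreteCategory.congr_hom (K.toCycles_i 0 1) ψ
  constructor
  · rintro ⟨ψ, rfl⟩
    exact ⟨ψ, (hd ψ).symm⟩
  · rintro ⟨ψ, h⟩
    exact ⟨ψ, hi ((hd ψ).trans h)⟩

/-- Pulling back a class along `f` precomposes its cocycles with a lift of `f`. -/
lemma ExtRep.map {c : ((Ext R (ModuleCat.{0} R) 1).obj (op Y)).obj M}
    {φ : Q.complex.X 1 ⟶ M} (hc : ExtRep M Q c φ) (f : X ⟶ Y) (h : P.complex ⟶ Q.complex)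
    (comm : h.f 0 ≫ Q.π.f 0 = P.π.f 0 ≫ f) :
    ExtRep M P (((Ext R (ModuleCat.{0} R) 1).map f.op).app M c) (h.f 1 ≫ φ) := by
  obtain ⟨z, hz, rfl⟩ := hc
  refine ⟨HomologicalComplex.cyclesMap (yonedaMap M h) 1 z, ?_, ?_⟩
  · have e1 := ConcreteCategory.congr_hom (isoExt_naturality M P Q f h comm 1) c
    have e2 := ConcreteCategory.congr_hom
      (HomologicalComplex.homologyπ_naturality (yonedaMap M h) 1) z
    refine (e2.symm.trans ?_).trans e1.symm
    exact congrArg (HomologicalComplex.homologyMap (yonedaMap M h) 1) hz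
  · exact ConcreteCategory.congr_hom (HomologicalComplex.cyclesMap_i (yonedaMap M h) 1) z
end

/-! ### The connecting map from `Hom` to `Ext¹` -/

section
open CategoryTheory Limits Opposite

variable {R : Type} [CommRing R] {X Y : ModuleCat.{0} R}
  (S : ShortComplex (ModuleCat.{0} R))
  (P : ProjectiveResolution X) (Q : ProjectiveResolution Y)

/-- The augmentation `P₀ ⟶ X` of a projective resolution, with `X` itself as its target rather than
degree `0` of the complex concentrated there. -/
noncomputable def aug : P.complex.X 0 ⟶ X := P.π.f 0

lemma aug_exact : ∃ h, (ShortComplex.mk (P.complex.d 1 0) (aug P) h).Exact := ⟨_, P.exact₀⟩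

instance : Epi (aug P) := inferInstanceAs (Epi (P.π.f 0))

lemma d_comp_aug : P.complex.d 1 0 ≫ aug P = 0 := P.complex_d_comp_π_f_zero

/-- The graph of the connecting map of `0 → S.X₁ → S.X₂ → S.X₃ → 0`: the map `f : X ⟶ S.X₃` is
sent to `c ∈ Ext¹(X, S.X₁)`. As in the snake lemma, `f` is lifted to `ψ : P₀ ⟶ S.X₂`, and
`d ≫ ψ` factors through a cocycle `φ : P₁ ⟶ S.X₁` of class `c`. -/
def SnakeRel (c : ((Ext R (ModuleCat.{0} R) 1).obj (op X)).obj S.X₁) (f : X ⟶ S.X₃) : Prop :=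
  ∃ (φ : P.complex.X 1 ⟶ S.X₁) (ψ : P.complex.X 0 ⟶ S.X₂), ExtRep S.X₁ P c φ ∧
    φ ≫ S.f = P.complex.d 1 0 ≫ ψ ∧ ψ ≫ S.g = aug P ≫ f

variable {S P Q}

lemma SnakeRel.add {c c' : ((Ext R (ModuleCat.{0} R) 1).obj (op X)).obj S.X₁} {f f' : X ⟶ S.X₃}
    (h : SnakeRel S P c f) (h' : SnakeRel S P c' f') : SnakeRel S P (c + c') (f + f') := by
  obtain ⟨φ, ψ, h1, h2, h3⟩ := h
  obtain ⟨φ', ψ', h1', h2', h3'⟩ := h'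
  exact ⟨φ + φ', ψ + ψ', h1.add h1', by simp [h2, h2'], by simp [h3, h3']⟩

lemma SnakeRel.smul {c : ((Ext R (ModuleCat.{0} R) 1).obj (op X)).obj S.X₁} {f : X ⟶ S.X₃}
    (h : SnakeRel S P c f) (r : R) : SnakeRel S P (r • c) (r • f) := by
  obtain ⟨φ, ψ, h1, h2, h3⟩ := h
  exact ⟨r • φ, r • ψ, h1.smul r, by simp [h2], by simp [h3]⟩

lemma SnakeRel.map {c : ((Ext R (ModuleCat.{0} R) 1).obj (op Y)).obj S.X₁} {f : Y ⟶ S.X₃}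
    (hc : SnakeRel S Q c f) (k : X ⟶ Y) :
    SnakeRel S P (((Ext R (ModuleCat.{0} R) 1).map k.op).app S.X₁ c) (k ≫ f) := by
  obtain ⟨φ, ψ, h1, h2, h3⟩ := hc
  let h := ProjectiveResolution.lift k P Q
  have comm : h.f 0 ≫ aug Q = aug P ≫ k := ProjectiveResolution.lift_commutes_zero k P Q
  refine ⟨h.f 1 ≫ φ, h.f 0 ≫ ψ, h1.map k h comm, ?_, ?_⟩
  · rw [Category.assoc, h2, h.comm_assoc 1 0]
  · rw [Category.assoc, h3, reassoc_of% comm]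

lemma SnakeRel.exists_ext (hS : S.ShortExact) (f : X ⟶ S.X₃) : ∃ c, SnakeRel S P c f := by
  have := hS.epi_g
  have := hS.mono_f
  let ψ : P.complex.X 0 ⟶ S.X₂ := Projective.factorThru (aug P ≫ f) S.g
  have hψ : ψ ≫ S.g = aug P ≫ f := Projective.factorThru_comp _ _
  have h0 : (P.complex.d 1 0 ≫ ψ) ≫ S.g = 0 := by
    rw [Category.assoc, hψ, ← Category.assoc, d_comp_aug, zero_comp]
  let φ := hS.exact.lift _ h0
  have hφ : φ ≫ S.f = P.complex.d 1 0 ≫ ψ := hS.exact.lift_f _ h0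
  obtain ⟨c, hc⟩ := ExtRep.exists_of_comp_eq_zero (P := P) φ (by
    rw [← cancel_mono S.f, Category.assoc, hφ]; simp)
  exact ⟨c, φ, ψ, hc, hφ, hψ⟩

/-- The connecting map is onto if `y` kills `X` and is invertible on `S.X₂`. Multiplication by `y` on
`P` is then null-homotopic, with homotopy `s` in degree `0`, so `y • φ = d ≫ s ≫ φ` for every cocycle
`φ`. Dividing by `y` in `S.X₂` makes `φ ≫ S.f` a coboundary. -/
lemma SnakeRel.exists_hom (y : R) (hy : y • 𝟙 X = 0)
    (v : S.X₂ ⟶ S.X₂) (hv : y • v = 𝟙 _)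
    (c : ((Ext R (ModuleCat.{0} R) 1).obj (op X)).obj S.X₁) : ∃ f, SnakeRel S P c f := by
  obtain ⟨φ, hφ⟩ := ExtRep.exists (P := P) c
  obtain ⟨w, hex⟩ := aug_exact P
  have h0 : (y • 𝟙 (P.complex.X 0)) ≫ aug P = 0 := by
    rw [Linear.smul_comp, Category.id_comp, ← Category.comp_id (aug P), ← Linear.comp_smul, hy,
      comp_zero]
  let s : P.complex.X 0 ⟶ P.complex.X 1 := hex.liftFromProjective _ h0
  have hs : s ≫ P.complex.d 1 0 = y • 𝟙 _ := hex.liftFromProjective_comp _ h0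
  let t : P.complex.X 1 ⟶ P.complex.X 1 := y • 𝟙 _ - P.complex.d 1 0 ≫ s
  have ht : t ≫ P.complex.d 1 0 = 0 := by
    simp [t, hs]
  let u : P.complex.X 1 ⟶ P.complex.X 2 := (P.exact_succ 0).liftFromProjective _ ht
  have hu : u ≫ P.complex.d 2 1 = t := (P.exact_succ 0).liftFromProjective_comp _ ht
  have htφ : t ≫ φ = 0 := by
    rw [← hu, Category.assoc, hφ.comp_eq_zero, comp_zero]
  have hyφ : y • φ = P.complex.d 1 0 ≫ s ≫ φ := by
    simpa [t, sub_eq_zero] using htφ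
  let ψ := s ≫ φ ≫ S.f ≫ v
  have hψ : φ ≫ S.f = P.complex.d 1 0 ≫ ψ := by
    have : P.complex.d 1 0 ≫ ψ = (P.complex.d 1 0 ≫ s ≫ φ) ≫ S.f ≫ v := by simp [ψ]
    rw [this, ← hyφ, Linear.smul_comp, ← Linear.comp_smul, ← Linear.comp_smul, hv,
      Category.comp_id]
  have h1 : P.complex.d 1 0 ≫ ψ ≫ S.g = 0 := by
    rw [← Category.assoc, ← hψ, Category.assoc, S.zero, comp_zero]
  have : Epi (ShortComplex.mk (P.complex.d 1 0) (aug P) w).g := inferInstanceAs (Epi (aug P))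
  exact ⟨hex.desc _ h1, φ, ψ, hφ, hψ, (hex.g_desc _ h1).symm⟩

/-- If `y` kills `X` and is invertible on `S.X₂`, then `Hom(X, S.X₂) = 0`, and so the connecting map
is injective. The converse direction, that it maps `0` to `0`, makes it single-valued. -/
lemma SnakeRel.eq_zero_iff (hS : S.ShortExact) (y : R) (hy : y • 𝟙 X = 0)
    (v : S.X₂ ⟶ S.X₂) (hv : y • v = 𝟙 _)
    {c : ((Ext R (ModuleCat.{0} R) 1).obj (op X)).obj S.X₁} {f : X ⟶ S.X₃}
    (h : SnakeRel S P c f) : c = 0 ↔ f = 0 := by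
  have := hS.mono_f
  obtain ⟨φ, ψ, h1, h2, h3⟩ := h
  rw [h1.eq_zero_iff]
  constructor
  · rintro ⟨ψ', rfl⟩
    obtain ⟨w, hex⟩ := aug_exact P
    have : Epi (ShortComplex.mk (P.complex.d 1 0) (aug P) w).g := inferInstanceAs (Epi (aug P))
    have h4 : P.complex.d 1 0 ≫ (ψ - ψ' ≫ S.f) = 0 := by
      rw [Preadditive.comp_sub, ← h2, Category.assoc, sub_self]
    let e : X ⟶ S.X₂ := hex.desc _ h4
    have he : aug P ≫ e = ψ - ψ' ≫ S.f := hex.g_desc _ h4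
    have he0 : e = 0 := by
      have hye : y • e = 0 := by
        rw [← Category.id_comp e, ← Linear.smul_comp, hy, zero_comp]
      rw [← Category.comp_id e, ← hv, Linear.comp_smul, ← Linear.smul_comp, hye, zero_comp]
    rw [he0, comp_zero, eq_comm, sub_eq_zero] at he
    rw [← cancel_epi (aug P), ← h3, he, Category.assoc, S.zero, comp_zero, comp_zero]
  · rintro rfl
    rw [comp_zero] at h3
    refine ⟨hS.exact.lift _ h3, ?_⟩
    rw [← cancel_mono S.f, Category.assoc, hS.exact.lift_f, h2]

/-- If `y` kills `X` and is invertible on `S.X₂`, the connecting map has an `R`-linear inverse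
`Ext¹(X, S.X₁) ≅ Hom(X, S.X₃)`. Its graph is `SnakeRel`, through which naturality in `X` is
available. -/
lemma exists_extHom (X : ModuleCat.{0} R) (hS : S.ShortExact) (y : R) (hy : y • 𝟙 X = 0)
    (v : S.X₂ ⟶ S.X₂) (hv : y • v = 𝟙 _) :
    ∃ F : ((Ext R (ModuleCat.{0} R) 1).obj (op X)).obj S.X₁ →ₗ[R] (X ⟶ S.X₃),
      Function.Bijective F ∧ ∀ c f, SnakeRel S (projectiveResolution X) c f ↔ F c = f := by
  have hz {c f} := SnakeRel.eq_zero_iff (P := projectiveResolution X) (c := c) (f := f) hS y hy v hv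
  have huniq {c f f'} (h : SnakeRel S (projectiveResolution X) c f)
      (h' : SnakeRel S (projectiveResolution X) c f') : f = f' := by
    have := h.add (h'.smul (-1))
    simpa [add_neg_eq_zero] using (hz this).1 (by simp)
  choose F hF using SnakeRel.exists_hom (P := projectiveResolution X) y hy v hv
  let G : ((Ext R (ModuleCat.{0} R) 1).obj (op X)).obj S.X₁ →ₗ[R] (X ⟶ S.X₃) :=
    { toFun := F
      map_add' c c' := huniq (hF _) ((hF c).add (hF c'))
      map_smul' r c := huniq (hF _) ((hF c).smul r) }
  refine ⟨G, ⟨?_, fun f => ?_⟩, fun c f => ⟨fun h => huniq (hF c) h, fun h => h ▸ hF c⟩⟩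
  · rw [injective_iff_map_eq_zero]
    exact fun c hc => (hz (hF c)).2 hc
  · obtain ⟨c, hc⟩ := SnakeRel.exists_ext (P := projectiveResolution X) hS f
    exact ⟨c, huniq (hF c) hc⟩
end

/-! ### First local cohomology at a principal ideal -/

section
open CategoryTheory Limits Opposite

/-- A filtered colimit of modules is isomorphic to any module exhausted by compatible injections from
the terms. -/
lemma isColimit_equiv {R : Type} [CommRing R] {D : Type} [SmallCategory D] [IsFiltered D]
    {F : D ⥤ ModuleCat.{0} R} {c : Cocone F} (hc : IsColimit c) {N : Type} [AddCommGroup N]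
    [Module R N] (l : ∀ d, F.obj d →ₗ[R] N) (hl : ∀ d, Function.Injective (l d))
    (hnat : ∀ (d d' : D) (h : d ⟶ d') (a : F.obj d), l d' (F.map h a) = l d a)
    (hsurj : ∀ z : N, ∃ d a, l d a = z) : Nonempty (c.pt ≃ₗ[R] N) := by
  let s : Cocone F :=
    { pt := ModuleCat.of R N
      ι := { app := fun d => ModuleCat.ofHom (l d)
             naturality := fun d d' h => by
               ext a
               exact hnat d d' h a } }
  have hs : ∀ d a, hc.desc s (c.ι.app d a) = l d a := fun d a =>
    ConcreteCategory.congr_hom (hc.fac s d) a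
  refine ⟨LinearEquiv.ofBijective (hc.desc s).hom ⟨?_, fun z => ?_⟩⟩
  · rw [injective_iff_map_eq_zero]
    intro t ht
    obtain ⟨d, a, rfl⟩ := Concrete.isColimit_exists_rep F hc t
    have : l d a = 0 := (hs d a).symm.trans ht
    rw [(hl d) (this.trans (map_zero _).symm), map_zero]
  · obtain ⟨d, a, rfl⟩ := hsurj z
    exact ⟨_, hs d a⟩

variable {R : Type} [CommRing R]

/-- If `x` is invertible on the middle term of a short exact sequence and the third term is
`x`-power torsion, then `H¹_x` of the first term is the third term: `Ext¹(R/xⁿ, S.X₁)` is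
`Hom(R/xⁿ, S.X₃)`, the `xⁿ`-torsion of `S.X₃`, naturally in `n`. -/
theorem localCohomology_one_equiv (x : R) (S : ShortComplex (ModuleCat.{0} R)) (hS : S.ShortExact)
    (v : S.X₂ ⟶ S.X₂) (hv : x • v = 𝟙 _) (htors : ∀ z : S.X₃, ∃ n : ℕ, x ^ n • z = 0) :
    Nonempty (((localCohomology (Ideal.span {x}) 1).obj S.X₁) ≃ₗ[R] S.X₃) := by
  have hpow : ∀ n : ℕ, ∃ w : S.X₂ ⟶ S.X₂, x ^ n • w = 𝟙 _ := by
    intro n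
    induction n with
    | zero => exact ⟨𝟙 _, by simp⟩
    | succ n ih =>
      obtain ⟨w, hw⟩ := ih
      refine ⟨w ≫ v, ?_⟩
      rw [pow_succ, mul_smul, ← Linear.comp_smul, hv, Category.comp_id, hw]
  have hkill : ∀ n : ℕ, x ^ n • 𝟙 (ModuleCat.of R (R ⧸ (Ideal.span {x} : Ideal R) ^ n)) = 0 := by
    intro n
    ext
    change Submodule.Quotient.mk (x ^ n • (1 : R)) = 0
    rw [Submodule.Quotient.mk_eq_zero, Ideal.span_singleton_pow]
    simp
  choose w hw using hpow
  choose G hG1 hG2 using fun n => exists_extHom (S := S) _ hS (x ^ n) (hkill n) (w n) (hw n)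
  let I := localCohomology.idealPowersDiagram (Ideal.span {x} : Ideal R)
  let ev (n : ℕ) : (ModuleCat.of R (R ⧸ (Ideal.span {x} : Ideal R) ^ n) ⟶ S.X₃) →ₗ[R] S.X₃ :=
    { toFun := fun f => f (Submodule.Quotient.mk (1 : R))
      map_add' := fun _ _ => rfl
      map_smul' := fun _ _ => rfl }
  have hev : ∀ n, Function.Injective (ev n) := by
    intro n f f' h
    ext
    exact h
  refine isColimit_equiv (D := ℕᵒᵖᵒᵖ)
    (isColimitOfPreserves ((evaluation _ _).obj S.X₁)
      (colimit.isColimit (localCohomology.diagram I 1)))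
    (fun d => (ev d.unop.unop).comp (G d.unop.unop)) ?_ ?_ ?_
  · exact fun d => (hev _).comp (hG1 _).1
  · intro d d' h a
    have h1 : SnakeRel S _ a (G d.unop.unop a) := (hG2 _ _ _).2 rfl
    have h2 := (hG2 _ _ _).1
      (h1.map (P := projectiveResolution _) ((localCohomology.ringModIdeals I).map h.unop))
    exact congrArg (ev d'.unop.unop) h2
  · intro z
    obtain ⟨n, hn⟩ := htors z
    let f : (R ⧸ (Ideal.span {x} : Ideal R) ^ n) →ₗ[R] S.X₃ :=
      Submodule.liftQ _ (LinearMap.toSpanSingleton R S.X₃ z) (by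
        rw [Ideal.span_singleton_pow, Ideal.span, Submodule.span_singleton_le_iff_mem]
        simpa using hn)
    obtain ⟨a, ha⟩ := (hG1 n).2 (ModuleCat.ofHom f)
    refine ⟨op (op n), a, ?_⟩
    change ev n (G n a) = z
    rw [ha]
    change (1 : R) • z = z
    rw [one_smul]
end

/-! ### Colon computations for a regular sequence -/

section
variable {R : Type} [CommRing R] {f g : R}

lemma mem_ideal_span_triple {w x y z : R} :
    w ∈ Ideal.span {x, y, z} ↔ ∃ a b c, a * x + b * y + c * z = w :=
  Submodule.mem_span_triple

lemma pow_dvd_of_pow_dvd_mul (hf : ∀ r, f * r = 0 → r = 0) (hg : ∀ r, f ∣ g * r → f ∣ r)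
    (k m : ℕ) (r : R) (h : f ^ k ∣ g ^ m * r) : f ^ k ∣ r := by
  have hgm : ∀ (m : ℕ) (r : R), f ∣ g ^ m * r → f ∣ r := by
    intro m
    induction m with
    | zero => intro r h; simpa using h
    | succ m ih => intro r h; exact ih r (hg _ (by rwa [pow_succ', mul_assoc] at h))
  induction k generalizing r with
  | zero => simp
  | succ k ih =>
    obtain ⟨s, rfl⟩ := hgm m r ((dvd_pow_self f k.succ_ne_zero).trans h)
    obtain ⟨t, ht⟩ := h
    have : g ^ m * s - f ^ k * t = 0 := hf _ (by linear_combination ht)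
    obtain ⟨u, rfl⟩ := ih s ⟨t, by linear_combination this⟩
    exact ⟨u, by ring⟩

lemma eq_zero_of_pow_mul (hf : ∀ r, f * r = 0 → r = 0) (k : ℕ) (r : R) (h : f ^ k * r = 0) :
    r = 0 := by
  induction k with
  | zero => simpa using h
  | succ k ih => exact ih (hf _ (by linear_combination h))

/-- The colon computation `((fg)^q, f^(q+m+1), g^(q+1)) : f^(q+1) ⊆ (g^q, f^m)`. -/
lemma mem_span_of_mul_add_mul_mem (hf : ∀ r, f * r = 0 → r = 0) (hg : ∀ r, f ∣ g * r → f ∣ r)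
    (q m : ℕ) (a b : R)
    (h : a * f ^ (q + 1) + b * g ^ (q + 1) ∈
      Ideal.span {(f * g) ^ q, f ^ (q + (m + 1)), g ^ (q + (m + 1))}) :
    a ∈ Ideal.span {g ^ q, f ^ m} := by
  obtain ⟨c₁, c₂, c₃, h⟩ := mem_ideal_span_triple.1 h
  obtain ⟨d, hd⟩ := pow_dvd_of_pow_dvd_mul hf hg q (q + 1) (c₃ * g ^ m - b)
    ⟨a * f - c₁ * g ^ q - c₂ * f ^ (m + 1), by linear_combination h⟩
  have h0 : a * f - c₁ * g ^ q - c₂ * f ^ (m + 1) - d * g ^ (q + 1) = 0 :=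
    eq_zero_of_pow_mul hf q _ (by linear_combination -h + g ^ (q + 1) * hd)
  obtain ⟨t, ht⟩ := pow_dvd_of_pow_dvd_mul hf hg 1 q (c₁ + d * g)
    ⟨a - c₂ * f ^ m, by linear_combination -h0⟩
  have h1 : a - c₂ * f ^ m - t * g ^ q = 0 := hf _ (by linear_combination h0 + g ^ q * ht)
  exact Ideal.mem_span_pair.2 ⟨t, c₂, by linear_combination -h1⟩

lemma mul_mem_of_mem_span (q m : ℕ) (a : R) (h : a ∈ Ideal.span {g ^ q, f ^ m}) :
    a * f ^ (q + 1) ∈ Ideal.span {(f * g) ^ q, f ^ (q + (m + 1)), g ^ (q + (m + 1))} := by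
  obtain ⟨c, d, rfl⟩ := Ideal.mem_span_pair.1 h
  exact mem_ideal_span_triple.2 ⟨c * f, d, 0, by ring⟩

lemma mem_span_of_mul_mem (hf : ∀ r, f * r = 0 → r = 0) (hg : ∀ r, f ∣ g * r → f ∣ r)
    (q m : ℕ) (b : R)
    (h : b * g ^ (q + 1) ∈ Ideal.span {(f * g) ^ q, f ^ (q + (m + 1)), g ^ (q + (m + 1))}) :
    b ∈ Ideal.span {f ^ q, g ^ m} := by
  obtain ⟨c₁, c₂, c₃, h⟩ := mem_ideal_span_triple.1 h
  obtain ⟨d, hd⟩ := pow_dvd_of_pow_dvd_mul hf hg q (q + 1) (b - c₃ * g ^ m)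
    ⟨c₁ * g ^ q + c₂ * f ^ (m + 1), by linear_combination -h⟩
  exact Ideal.mem_span_pair.2 ⟨d, c₃, by linear_combination -hd⟩

/-- The element `a u₁ + b u₂` vanishes exactly when `a` and `b` lie in the asserted annihilators of
`u₁` and `u₂`; this contains both the annihilator formulas and the directness of the sum. -/
lemma mul_add_mul_mem_iff (hf : ∀ r, f * r = 0 → r = 0) (hg : ∀ r, f ∣ g * r → f ∣ r)
    (q m : ℕ) (a b : R) :
    a * f ^ (q + 1) + b * g ^ (q + 1) ∈
        Ideal.span {(f * g) ^ q, f ^ (q + (m + 1)), g ^ (q + (m + 1))} ↔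
      a ∈ Ideal.span {g ^ q, f ^ m} ∧ b ∈ Ideal.span {f ^ q, g ^ m} := by
  have hswap : Ideal.span {(g * f) ^ q, g ^ (q + (m + 1)), f ^ (q + (m + 1))} =
      Ideal.span {(f * g) ^ q, f ^ (q + (m + 1)), g ^ (q + (m + 1))} := by
    rw [mul_comm g f, Set.pair_comm]
  constructor
  · intro h
    have ha := mem_span_of_mul_add_mul_mem hf hg q m a b h
    exact ⟨ha, mem_span_of_mul_mem hf hg q m b
      ((Submodule.add_mem_iff_right _ (mul_mem_of_mem_span q m a ha)).1 h)⟩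
  · rintro ⟨ha, hb⟩
    exact add_mem (mul_mem_of_mem_span q m a ha) (hswap ▸ mul_mem_of_mem_span q m b hb)

end

/-! ### The quotient of a localization by the module -/

section
variable {R : Type} [CommRing R]

/-- The module `M_x / M`, i.e. the cokernel of the localization map `M → M_x`. -/
abbrev LocQuot (x : R) (M : Type) [AddCommGroup M] [Module R M] : Type :=
  LocalizedModule (Submonoid.powers x) M ⧸
    LinearMap.range (LocalizedModule.mkLinearMap (Submonoid.powers x) M)

variable (x : R) {M : Type} [AddCommGroup M] [Module R M]

/-- The map `M → M_x / M`, `m ↦ m / x ^ n`. -/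
noncomputable def fracMap (n : ℕ) : M →ₗ[R] LocQuot x M :=
  (Submodule.mkQ _).comp
    ((LocalizedModule.divBy (Submonoid.pow x n)).comp
      (LocalizedModule.mkLinearMap (Submonoid.powers x) M))

lemma fracMap_apply (n : ℕ) (m : M) : fracMap x n m =
    Submodule.Quotient.mk (LocalizedModule.mk m (Submonoid.pow x n)) := by
  simp [fracMap, LocalizedModule.divBy_apply, LocalizedModule.mkLinearMap_apply,
    LocalizedModule.liftOn_mk]

lemma exists_fracMap_eq (z : LocQuot x M) : ∃ n m, fracMap x n m = z := by
  obtain ⟨z, rfl⟩ := Submodule.mkQ_surjective _ z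
  induction z using LocalizedModule.induction_on with
  | h m s =>
    obtain ⟨_, n, rfl⟩ := s
    exact ⟨n, m, fracMap_apply x n m⟩

lemma fracMap_add (n k : ℕ) (m : M) : fracMap x (n + k) (x ^ k • m) = fracMap x n m := by
  rw [fracMap_apply, fracMap_apply]
  refine congrArg Submodule.Quotient.mk (LocalizedModule.mk_eq.2 ⟨1, ?_⟩)
  rw [one_smul, one_smul]
  change x ^ n • x ^ k • m = x ^ (n + k) • m
  rw [smul_smul, pow_add]

lemma fracMap_eq_zero_iff (hx : ∀ m : M, x • m = 0 → m = 0) (n : ℕ) (m : M) :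
    fracMap x n m = 0 ↔ ∃ m', x ^ n • m' = m := by
  have hxn : ∀ (n : ℕ) (m : M), x ^ n • m = 0 → m = 0 := by
    intro n
    induction n with
    | zero => intro m h; simpa using h
    | succ n ih => intro m h; exact ih _ (hx _ (by rwa [pow_succ', mul_smul] at h))
  rw [fracMap_apply, Submodule.Quotient.mk_eq_zero]
  constructor
  · rintro ⟨m', h⟩
    obtain ⟨⟨_, k, rfl⟩, h⟩ := LocalizedModule.mk_eq.1 h
    replace h : x ^ k • x ^ n • m' = x ^ k • (1 : Submonoid.powers x) • m := h
    rw [one_smul] at h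
    refine ⟨m', sub_eq_zero.1 (hxn k _ ?_)⟩
    rw [smul_sub, h, sub_self]
  · rintro ⟨m', rfl⟩
    exact ⟨m', LocalizedModule.mk_eq.2 ⟨1, by rw [one_smul, one_smul, one_smul]; rfl⟩⟩
end

section
open CategoryTheory

/-- `H¹_x(M) ≅ M_x / M` when `x` is a nonzerodivisor on `M`. -/
theorem localCohomology_one_equiv_locQuot {R : Type} [CommRing R] (x : R) (M : Type)
    [AddCommGroup M] [Module R M] (hx : ∀ m : M, x • m = 0 → m = 0) :
    Nonempty (((localCohomology (Ideal.span {x}) 1).obj (ModuleCat.of R M)) ≃ₗ[R]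
      LocQuot x M) := by
  let ι := LocalizedModule.mkLinearMap (Submonoid.powers x) M
  let S : ShortComplex (ModuleCat.{0} R) := ShortComplex.mk
    (X₁ := ModuleCat.of R M) (X₂ := ModuleCat.of R (LocalizedModule (Submonoid.powers x) M))
    (X₃ := ModuleCat.of R (LocQuot x M))
    (ModuleCat.ofHom ι) (ModuleCat.ofHom (LinearMap.range ι).mkQ) (by
      ext m
      exact (Submodule.Quotient.mk_eq_zero _).2 ⟨m, rfl⟩)
  have hinj : Function.Injective ι := by
    rw [injective_iff_map_eq_zero]
    intro m hm
    obtain ⟨⟨_, n, rfl⟩, h⟩ := LocalizedModule.mk_eq.1 (hm.trans (LocalizedModule.zero_mk 1).symm)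
    replace h : x ^ n • (1 : Submonoid.powers x) • m = x ^ n • (1 : Submonoid.powers x) • 0 := h
    rw [one_smul, one_smul, smul_zero] at h
    clear hm
    induction n with
    | zero => simpa using h
    | succ n ih => exact ih (hx _ (by rwa [pow_succ', mul_smul] at h))
  have hS : S.ShortExact :=
    { exact := by
        rw [ShortComplex.moduleCat_exact_iff]
        intro z hz
        exact (Submodule.Quotient.mk_eq_zero _).1 hz
      mono_f := (ModuleCat.mono_iff_injective _).2 hinj
      epi_g := (ModuleCat.epi_iff_surjective _).2 (Submodule.mkQ_surjective _) }
  refine localCohomology_one_equiv x S hS (ModuleCat.ofHom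
    ((LocalizedModule.divBy (⟨x, Submonoid.mem_powers x⟩ : Submonoid.powers x)))) ?_ ?_
  · ext z
    exact LocalizedModule.mul_by_divBy (⟨x, Submonoid.mem_powers x⟩ : Submonoid.powers x) z
  · intro z
    obtain ⟨n, m, rfl⟩ := exists_fracMap_eq x z
    refine ⟨n, ?_⟩
    rw [← map_smul, fracMap_eq_zero_iff x hx]
    exact ⟨m, rfl⟩
end

/-! ### The direct limit -/

section
variable {R : Type} [CommRing R]

lemma exists_injective_of_ker_eq {A B C : Type} [AddCommGroup A] [Module R A] [AddCommGroup B]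
    [Module R B] [AddCommGroup C] [Module R C] (π : A →ₗ[R] B) (κ : A →ₗ[R] C)
    (hπ : Function.Surjective π) (h : ∀ a, π a = 0 ↔ κ a = 0) :
    ∃ ψ : B →ₗ[R] C, Function.Injective ψ ∧ ∀ a, ψ (π a) = κ a := by
  let e := π.quotKerEquivOfSurjective hπ
  let ψ := ((LinearMap.ker π).liftQ κ fun a ha => (h a).1 ha).comp e.symm.toLinearMap
  have hψ : ∀ a, ψ (π a) = κ a := fun a => by
    have : e.symm (π a) = Submodule.Quotient.mk a := (LinearEquiv.symm_apply_eq e).2 rfl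
    simp only [ψ, LinearMap.comp_apply, LinearEquiv.coe_coe, this]
    rfl
  refine ⟨ψ, ?_, hψ⟩
  rw [injective_iff_map_eq_zero]
  intro b hb
  obtain ⟨a, rfl⟩ := hπ b
  exact (h a).2 (by rwa [hψ] at hb)

lemma directLimit_equiv {G : ℕ → Type} [∀ i, AddCommGroup (G i)] [∀ i, Module R (G i)]
    (θ : ∀ i j : ℕ, i ≤ j → G i →ₗ[R] G j) {N : Type} [AddCommGroup N] [Module R N]
    (ψ : ∀ i, G i →ₗ[R] N) (hψ : ∀ i, Function.Injective (ψ i))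
    (hcomp : ∀ i j hij x, ψ j (θ i j hij x) = ψ i x) (hsurj : ∀ z, ∃ i x, ψ i x = z) :
    Nonempty (Module.DirectLimit G θ ≃ₗ[R] N) := by
  refine ⟨LinearEquiv.ofBijective (Module.DirectLimit.lift R ℕ G θ ψ hcomp)
    ⟨Module.DirectLimit.lift_injective ψ hcomp hψ, fun z => ?_⟩⟩
  obtain ⟨i, x, rfl⟩ := hsurj z
  exact ⟨Module.DirectLimit.of R ℕ G θ i x, Module.DirectLimit.lift_of ..⟩

/-- For `q ∈ ℕ`, the map `(a, b) ↦ (a / g ^ q, b / f ^ q)` into the product of the modules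
representing the two local cohomology modules; `(a, b)` stands for the coefficients of
`a u₁ + b u₂`. -/
noncomputable def limitMap (f g : R) (m q : ℕ) :
    R × R →ₗ[R] LocQuot g (R ⧸ Ideal.span {f ^ m}) × LocQuot f (R ⧸ Ideal.span {g ^ m}) :=
  LinearMap.prodMap ((fracMap g q).comp (Ideal.span {f ^ m}).mkQ)
    ((fracMap f q).comp (Ideal.span {g ^ m}).mkQ)

variable {f g : R}

lemma fracMap_mk_eq_zero_iff (m q : ℕ)
    (h : ∀ z : R ⧸ Ideal.span {f ^ m}, g • z = 0 → z = 0) (a : R) :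
    fracMap g q ((Ideal.span {f ^ m}).mkQ a) = 0 ↔ a ∈ Ideal.span {g ^ q, f ^ m} := by
  rw [fracMap_eq_zero_iff g h, Ideal.mem_span_pair]
  constructor
  · rintro ⟨z, hz⟩
    obtain ⟨c, rfl⟩ := Submodule.mkQ_surjective _ z
    rw [← map_smul, ← sub_eq_zero, ← map_sub] at hz
    obtain ⟨d, hd⟩ := Ideal.mem_span_singleton'.1 ((Submodule.Quotient.mk_eq_zero _).1 hz)
    rw [smul_eq_mul] at hd
    exact ⟨c, -d, by linear_combination -hd⟩
  · rintro ⟨c, d, rfl⟩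
    refine ⟨(Ideal.span {f ^ m}).mkQ c, ?_⟩
    rw [← map_smul, ← sub_eq_zero, ← map_sub]
    refine (Submodule.Quotient.mk_eq_zero _).2 (Ideal.mem_span_singleton'.2 ⟨-d, ?_⟩)
    rw [smul_eq_mul]
    ring

lemma smul_quotient_eq_zero (m : ℕ) (h : ∀ r : R, f ^ m ∣ g * r → f ^ m ∣ r)
    (z : R ⧸ Ideal.span {f ^ m}) (hz : g • z = 0) : z = 0 := by
  obtain ⟨c, rfl⟩ := Submodule.mkQ_surjective _ z
  rw [← map_smul] at hz
  exact (Submodule.Quotient.mk_eq_zero _).2 (Ideal.mem_span_singleton.2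
    (h c (Ideal.mem_span_singleton.1 ((Submodule.Quotient.mk_eq_zero _).1 hz))))

/-- In a regular sequence `f, g`, the first element is also regular modulo powers of the second. -/
lemma regular_mod_pow_swap (hf : ∀ r, f * r = 0 → r = 0) (hg : ∀ r, f ∣ g * r → f ∣ r)
    (m : ℕ) (r : R) (h : g ^ m ∣ f * r) : g ^ m ∣ r := by
  obtain ⟨s, hs⟩ := h
  obtain ⟨t, rfl⟩ : f ∣ s := by
    simpa using pow_dvd_of_pow_dvd_mul hf hg 1 m s ⟨r, by linear_combination -hs⟩
  have := hf (r - g ^ m * t) (by linear_combination hs)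
  exact ⟨t, by linear_combination this⟩

lemma limitMap_eq_zero_iff (hf : ∀ r, f * r = 0 → r = 0) (hg : ∀ r, f ∣ g * r → f ∣ r)
    (m q : ℕ) (a b : R) : limitMap f g m q (a, b) = 0 ↔
      a ∈ Ideal.span {g ^ q, f ^ m} ∧ b ∈ Ideal.span {f ^ q, g ^ m} := by
  rw [← fracMap_mk_eq_zero_iff m q (smul_quotient_eq_zero m fun r h =>
      pow_dvd_of_pow_dvd_mul hf hg m 1 r (by simpa using h)),
    ← fracMap_mk_eq_zero_iff m q (smul_quotient_eq_zero m (regular_mod_pow_swap hf hg m))]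
  exact Prod.mk_eq_zero

/-- The maps `limitMap` turn the transition maps into equalities: raising the exponent by `k`
amounts to multiplying the coefficients of `u₁` and `u₂` by `g ^ k` and `f ^ k`. -/
lemma limitMap_add (m q k : ℕ) (a b : R) :
    limitMap f g m (q + k) (g ^ k * a, f ^ k * b) = limitMap f g m q (a, b) :=
  Prod.ext (fracMap_add g q k ((Ideal.span {f ^ m}).mkQ a))
    (fracMap_add f q k ((Ideal.span {g ^ m}).mkQ b))

lemma exists_limitMap_eq (m : ℕ)
    (z : LocQuot g (R ⧸ Ideal.span {f ^ m}) × LocQuot f (R ⧸ Ideal.span {g ^ m})) :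
    ∃ n, ∀ q, n ≤ q → ∃ c, limitMap f g m q c = z := by
  obtain ⟨z₁, z₂⟩ := z
  obtain ⟨n₁, a, rfl⟩ := exists_fracMap_eq g z₁
  obtain ⟨n₂, b, rfl⟩ := exists_fracMap_eq f z₂
  obtain ⟨a, rfl⟩ := Submodule.mkQ_surjective _ a
  obtain ⟨b, rfl⟩ := Submodule.mkQ_surjective _ b
  refine ⟨max n₁ n₂, fun q hq => ?_⟩
  obtain ⟨k₁, rfl⟩ := Nat.exists_eq_add_of_le ((le_max_left _ _).trans hq)
  obtain ⟨k₂, hk⟩ := Nat.exists_eq_add_of_le ((le_max_right _ _).trans hq)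
  refine ⟨(g ^ k₁ * a, f ^ k₂ * b), Prod.ext (fracMap_add g n₁ k₁ ((Ideal.span {f ^ m}).mkQ a)) ?_⟩
  change fracMap f (n₁ + k₁) _ = _
  rw [hk]
  exact fracMap_add f n₂ k₂ ((Ideal.span {g ^ m}).mkQ b)

/-- The presentation `(a, b) ↦ a u₁ + b u₂` of the `e`-th term of the directed system. -/
noncomputable def genMap (p : ℕ) (f g : R) (e : ℕ) : R × R →ₗ[R] Nmod p f g e :=
  LinearMap.codRestrict _ ((Dideal p f g e).mkQ.comp
    ((LinearMap.toSpanSingleton R R (f ^ (p ^ e + 1))).coprod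
      (LinearMap.toSpanSingleton R R (g ^ (p ^ e + 1))))) fun c =>
    Submodule.mem_map_of_mem (Ideal.mem_span_pair.2 ⟨c.1, c.2, rfl⟩)

lemma coe_genMap (p : ℕ) (f g : R) (e : ℕ) (a b : R) :
    (genMap p f g e (a, b) : R ⧸ Dideal p f g e) =
      Submodule.Quotient.mk (a * f ^ (p ^ e + 1) + b * g ^ (p ^ e + 1)) := rfl

lemma genMap_surjective (p : ℕ) (f g : R) (e : ℕ) : Function.Surjective (genMap p f g e) := by
  rintro ⟨_, s, hs, rfl⟩
  obtain ⟨a, b, rfl⟩ := Ideal.mem_span_pair.1 hs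
  exact ⟨(a, b), rfl⟩
 
lemma genMap_eq_zero_iff (hf : ∀ r, f * r = 0 → r = 0) (hg : ∀ r, f ∣ g * r → f ∣ r)
    (m e : ℕ) (a b : R) : genMap (m + 1) f g e (a, b) = 0 ↔
      a ∈ Ideal.span {g ^ (m + 1) ^ e, f ^ m} ∧ b ∈ Ideal.span {f ^ (m + 1) ^ e, g ^ m} := by
  rw [← mul_add_mul_mem_iff hf hg, ← Submodule.coe_eq_zero, coe_genMap,
    Submodule.Quotient.mk_eq_zero]
  rfl

/-- By `genMap_eq_zero_iff` and `limitMap_eq_zero_iff`, the kernel of the presentation of the `e`-th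
term equals that of `limitMap` at `q = (m + 1) ^ e`, so every term embeds compatibly in the product
of localization quotients, and the images exhaust it. -/
theorem nonempty_directLimit_equiv (hf : ∀ r, f * r = 0 → r = 0) (hg : ∀ r, f ∣ g * r → f ∣ r)
    (m : ℕ) (hm : m ≠ 0)
    (θ : ∀ i j : ℕ, i ≤ j → ↥(Nmod (m + 1) f g i) →ₗ[R] ↥(Nmod (m + 1) f g j))
    (hθ : ∀ (i j : ℕ) (hij : i ≤ j) (x : ↥(Nmod (m + 1) f g i)) (r : R),
      (x : R ⧸ Dideal (m + 1) f g i) = Submodule.Quotient.mk r →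
        ((θ i j hij x : R ⧸ Dideal (m + 1) f g j)
          = Submodule.Quotient.mk ((f * g) ^ ((m + 1) ^ j - (m + 1) ^ i) * r))) :
    Nonempty (Module.DirectLimit (fun e => ↥(Nmod (m + 1) f g e)) θ ≃ₗ[R]
        (↥((localCohomology (Ideal.span {g}) 1).obj
              (ModuleCat.of R (R ⧸ Ideal.span {f ^ m})))
          × ↥((localCohomology (Ideal.span {f}) 1).obj
              (ModuleCat.of R (R ⧸ Ideal.span {g ^ m}))))) := by
  obtain ⟨e₁⟩ := localCohomology_one_equiv_locQuot g (R ⧸ Ideal.span {f ^ m})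
    (smul_quotient_eq_zero m fun r h => pow_dvd_of_pow_dvd_mul hf hg m 1 r (by simpa using h))
  obtain ⟨e₂⟩ := localCohomology_one_equiv_locQuot f (R ⧸ Ideal.span {g ^ m})
    (smul_quotient_eq_zero m (regular_mod_pow_swap hf hg m))
  choose ψ hψ hψg using fun e => exists_injective_of_ker_eq (genMap (m + 1) f g e)
    (limitMap f g m ((m + 1) ^ e)) (genMap_surjective _ f g e) (fun c =>
      (genMap_eq_zero_iff hf hg m e c.1 c.2).trans (limitMap_eq_zero_iff hf hg m _ c.1 c.2).symm)
  obtain ⟨E⟩ := directLimit_equiv θ ψ hψ (fun i j hij x => by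
    obtain ⟨⟨a, b⟩, rfl⟩ := genMap_surjective _ f g i x
    obtain ⟨k, hk⟩ : ∃ k, (m + 1) ^ j = (m + 1) ^ i + k :=
      Nat.exists_eq_add_of_le (Nat.pow_le_pow_right m.succ_pos hij)
    have h : θ i j hij (genMap (m + 1) f g i (a, b)) =
        genMap (m + 1) f g j (g ^ k * a, f ^ k * b) := by
      apply Subtype.ext
      rw [hθ i j hij _ _ (coe_genMap _ f g i a b), coe_genMap, hk, Nat.add_sub_cancel_left]
      congr 1
      ring
    rw [h, hψg, hψg, hk, limitMap_add]) (fun z => by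
    obtain ⟨n, hn⟩ := exists_limitMap_eq m z
    obtain ⟨c, rfl⟩ := hn ((m + 1) ^ n) (Nat.lt_pow_self (by omega)).le
    exact ⟨n, _, hψg n c⟩)
  exact ⟨E.trans (e₁.prodCongr e₂).symm⟩
end

/-! ### The decomposition and the limit -/

/-- Let `R` be Noetherian of prime characteristic `p > 0` and `f, g` a
regular sequence.  For `q = p^e` consider the directed system
`(f^{q+1}, g^{q+1})/((fg)^q, f^{q+p}, g^{q+p})` with transition maps multiplication by
`(fg)^{qp-q}`.  Each term is the internal direct sum `R u₁ ⊕ R u₂`, where `u₁`, `u₂` are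
the classes of `f^{q+1}`, `g^{q+1}`, with annihilators `(g^q, f^{p-1})` and
`(f^q, g^{p-1})` respectively; consequently the direct limit is isomorphic to
`H^1_g(R/f^{p-1}) ⊕ H^1_f(R/g^{p-1})`. -/
theorem statement8 (R : Type) [CommRing R] [IsNoetherianRing R]
    (p : ℕ) [Fact p.Prime] [CharP R p]
    (f g : R) (hreg : RingTheory.Sequence.IsRegular R [f, g])
    (θ : ∀ i j : ℕ, i ≤ j → ↥(Nmod p f g i) →ₗ[R] ↥(Nmod p f g j))
    (hθ : ∀ (i j : ℕ) (hij : i ≤ j) (x : ↥(Nmod p f g i)) (r : R),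
      (x : R ⧸ Dideal p f g i) = Submodule.Quotient.mk r →
        ((θ i j hij x : R ⧸ Dideal p f g j)
          = Submodule.Quotient.mk ((f * g) ^ (p ^ j - p ^ i) * r))) :
    (∀ e : ℕ,
      Submodule.span R {(Submodule.Quotient.mk (f ^ (p ^ e + 1)) : R ⧸ Dideal p f g e)}
          ⊓ Submodule.span R
              {(Submodule.Quotient.mk (g ^ (p ^ e + 1)) : R ⧸ Dideal p f g e)} = ⊥
      ∧ Submodule.span R {(Submodule.Quotient.mk (f ^ (p ^ e + 1)) : R ⧸ Dideal p f g e)}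
          ⊔ Submodule.span R
              {(Submodule.Quotient.mk (g ^ (p ^ e + 1)) : R ⧸ Dideal p f g e)}
          = Nmod p f g e)
    ∧ (∀ (e : ℕ) (r : R),
        r • (Submodule.Quotient.mk (f ^ (p ^ e + 1)) : R ⧸ Dideal p f g e) = 0 ↔
          r ∈ Ideal.span {g ^ p ^ e, f ^ (p - 1)})
    ∧ (∀ (e : ℕ) (r : R),
        r • (Submodule.Quotient.mk (g ^ (p ^ e + 1)) : R ⧸ Dideal p f g e) = 0 ↔
          r ∈ Ideal.span {f ^ p ^ e, g ^ (p - 1)})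
    ∧ Nonempty (
        Module.DirectLimit (fun e => ↥(Nmod p f g e)) θ
        ≃ₗ[R]
        (↥((localCohomology (Ideal.span {g}) 1).obj
              (ModuleCat.of R (R ⧸ Ideal.span {f ^ (p - 1)})))
          × ↥((localCohomology (Ideal.span {f}) 1).obj
              (ModuleCat.of R (R ⧸ Ideal.span {g ^ (p - 1)}))))) := by
  have hw := hreg.toIsWeaklyRegular
  rw [RingTheory.Sequence.isWeaklyRegular_cons_iff,
    RingTheory.Sequence.isWeaklyRegular_singleton_iff] at hw
  have hf : ∀ r : R, f * r = 0 → r = 0 := fun r h => hw.1 (h.trans (smul_zero f).symm)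
  have hg : ∀ r : R, f ∣ g * r → f ∣ r := by
    rintro r ⟨s, hs⟩
    have h : g • (Submodule.Quotient.mk r : QuotSMulTop f R) = 0 :=
      (Submodule.Quotient.mk_eq_zero _).2
        ((Submodule.mem_smul_pointwise_iff_exists ..).2 ⟨s, trivial, hs.symm⟩)
    obtain ⟨t, -, ht⟩ := (Submodule.mem_smul_pointwise_iff_exists ..).1
      ((Submodule.Quotient.mk_eq_zero _).1 (hw.2 (h.trans (smul_zero g).symm)))
    exact ⟨t, ht.symm⟩
  obtain ⟨m, rfl⟩ : ∃ m, p = m + 1 := ⟨p - 1, (Nat.succ_pred_prime Fact.out).symm⟩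
  have hm : m ≠ 0 := by
    rintro rfl
    exact Nat.not_prime_one Fact.out
  simp only [Nat.add_sub_cancel]
  have hgen := genMap_eq_zero_iff hf hg m
  have hmk : ∀ (e : ℕ) (a b : R),
      a • (Submodule.Quotient.mk (f ^ ((m + 1) ^ e + 1)) : R ⧸ Dideal (m + 1) f g e) +
        b • (Submodule.Quotient.mk (g ^ ((m + 1) ^ e + 1)) : R ⧸ Dideal (m + 1) f g e) = 0 ↔
      genMap (m + 1) f g e (a, b) = 0 := fun e a b =>
    Submodule.coe_eq_zero (x := genMap (m + 1) f g e (a, b))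
  refine ⟨fun e => ⟨?_, ?_⟩, fun e r => ?_, fun e r => ?_,
    nonempty_directLimit_equiv hf hg m hm θ hθ⟩
  · rw [eq_bot_iff]
    rintro z ⟨h₁, h₂⟩
    obtain ⟨a, rfl⟩ := Submodule.mem_span_singleton.1 h₁
    obtain ⟨b, hb⟩ := Submodule.mem_span_singleton.1 h₂
    have h := (hgen e a (-b)).1 ((hmk e a (-b)).1 (by rw [neg_smul, hb, add_neg_cancel]))
    have h0 := (hmk e a 0).2 ((hgen e a 0).2 ⟨h.1, zero_mem _⟩)
    rwa [zero_smul, add_zero] at h0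
  · rw [Nmod, Ideal.span, Submodule.map_span, Set.image_pair, Submodule.span_insert]
    rfl
  · have h := (hmk e r 0).trans (hgen e r 0)
    rw [zero_smul, add_zero] at h
    exact h.trans (and_iff_left (zero_mem _))
  · have h := (hmk e 0 r).trans (hgen e 0 r)
    rw [zero_smul, zero_add] at h
    exact h.trans (and_iff_right (zero_mem _))
end

section
/- Let A be a Noetherian ring, f_1,…,f_t,h a permutable regular sequence, and I an ideal containing (f_1,…,f_t,h). Fix δ ≥ 0. If H^δ_I(H^t_{(f_1,…,f_t)}(A/hA)) = 0, then H^δ_I(H^t_{(f_1,…,f_t)}(A/h^nA)) = 0 for all n ≥ 1, and consequently H^δ_I(H^{t+1}_{(f_1,…,f_t,h)}(A)) = 0. In particular Supp H^δ_I(H^{t+1}_{(𝐟,h)}(A)) ⊆ Supp H^δ_I(H^t_𝐟(A/h)). -/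
/-!
Write `N_n = H^t_f(A/h^n)` and `N = H^{t+1}_{(f,h)}(A)`. The point is that `N_n` is the
`h^n`-torsion `N[h^n]` of `N`, and that `N` is `h`-divisible and the union of its submodules
`N[h^n]`. Hence `h : N[h^{n+1}] → N[h^n]` is onto with kernel `N[h]`, which is the exact sequence
`0 → N_1 → N_{n+1} → N_n → 0`. The long exact sequence of `Ext` carries the vanishing of `H^δ_I`
from `N_1` to all `N_n` by induction, and the commutation of `Ext^δ(X, _)`, `X` finite, with
increasing unions carries it to `N`.

The description of `N_n` and `N` is explicit. Local cohomology is the direct limit of the modules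
`Ext^n(A/J^k, M)` (`exists_lcMap`). Its definition uses the derived-functor `Ext`, while the long
exact sequences are available for `Abelian.Ext`; `exists_extEquiv` compares the two. For a
regular sequence `x_0, …, x_{t-1}` of elements of `A`, dimension shifting gives
`Ext^t(A/(x^k), M) = M/(x^k)M` (`koszul_ext`), so `H^t_{(x)}(M)` is the direct limit of the modules
`M/(x^k)M` along multiplication by powers of `x_0 ⋯ x_{t-1}` (`exists_topMap`). The
permutability hypothesis makes each `x_i` a nonzerodivisor modulo powers of the others, and the
resulting colon formula (`PermRegular.colon`) shows that for `N_n` and `N` the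
transition maps are injective. So `N_n` is the union of the modules `A/(f^k, h^n)` and `N` is the
union of the modules `A/(f^k, h^k)`. Multiplication by `(f_1 ⋯ f_t)^n h^k` then embeds the `k`-th
stage of `N_n` in the `(k+n)`-th stage of `N`, and the image of `N_n` is `N[h^n]`
(`exists_torsion_model`).

Vanishing and the inclusion of supports are treated together. For a submonoid `S` of `A`, the
argument is run for the property that every element of `H^δ_I(M)` is killed by an element of `S`
(`LCTorsion`): `S = {1}` gives vanishing, and the complement of a prime ideal gives the statement
that this prime is outside the support.
-/

section
open CategoryTheory Limits Opposite

/-! ### Comparison of the two definitions of `Ext` -/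

section
variable {A : Type} [CommRing A]

/-- The map sending a cycle of a short complex of modules to its homology class. -/
noncomputable def hcls (S : ShortComplex (ModuleCat.{0} A)) :
    LinearMap.ker S.g.hom →ₗ[A] S.homology :=
  (S.moduleCatCyclesIso.inv ≫ S.homologyπ).hom

lemma hcls_surjective (S : ShortComplex (ModuleCat.{0} A)) : Function.Surjective (hcls S) := by
  exact (ModuleCat.epi_iff_surjective (S.moduleCatCyclesIso.inv ≫ S.homologyπ)).1 inferInstance

lemma hcls_eq_zero_iff (S : ShortComplex (ModuleCat.{0} A)) (z : LinearMap.ker S.g.hom) :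
    hcls S z = 0 ↔ ∃ y, S.f.hom y = z.1 := by
  have h1 : (S.moduleCatCyclesIso.inv ≫ S.homologyπ) =
    S.moduleCatLeftHomologyData.π ≫ S.moduleCatHomologyIso.inv :=
    S.moduleCatLeftHomologyData.π_comp_homologyIso_inv.symm
  have h2 : Function.Injective S.moduleCatHomologyIso.inv.hom :=
    (ModuleCat.mono_iff_injective _).1 inferInstance
  have h3 : hcls S z = S.moduleCatHomologyIso.inv.hom
      ((LinearMap.range S.moduleCatToCycles).mkQ z) :=
    congrArg (fun f => f.hom z) h1
  have h4 : hcls S z = 0 ↔ (LinearMap.range S.moduleCatToCycles).mkQ z = 0 := by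
    rw [h3]
    exact map_eq_zero_iff S.moduleCatHomologyIso.inv.hom h2
  rw [h4, Submodule.mkQ_apply, Submodule.Quotient.mk_eq_zero]
  constructor
  · rintro ⟨y, hy⟩
    exact ⟨y, congrArg Subtype.val hy⟩
  · rintro ⟨y, hy⟩
    exact ⟨y, Subtype.ext hy⟩

/-- Naturality of `hcls`: `homologyMap φ` sends the class of `z` to the class of `φ z`. -/
lemma hcls_map {S T : ShortComplex (ModuleCat.{0} A)} (φ : S ⟶ T) (z : LinearMap.ker S.g.hom)
    (w : LinearMap.ker T.g.hom) (h : w.1 = φ.τ₂.hom z.1) :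
    ShortComplex.homologyMap φ (hcls S z) = hcls T w := by
  have h1 : S.moduleCatCyclesIso.inv ≫ ShortComplex.cyclesMap φ ≫ T.iCycles
     = S.moduleCatLeftHomologyData.i ≫ φ.τ₂ := by
    simp
  have h2 : ShortComplex.cyclesMap φ (S.moduleCatCyclesIso.inv z) = T.moduleCatCyclesIso.inv w := by
    apply (ModuleCat.mono_iff_injective T.iCycles).1 inferInstance
    have := congrArg (fun f => f.hom z) h1
    have h3 : T.iCycles (T.moduleCatCyclesIso.inv w) = w.1 := by
      have : T.moduleCatCyclesIso.inv ≫ T.iCycles = T.moduleCatLeftHomologyData.i := by simp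
      exact congrArg (fun f => f.hom w) this
    rw [h3, h]
    exact this
  have h4 := congrArg (fun f => f.hom (S.moduleCatCyclesIso.inv z)) (ShortComplex.homologyπ_naturality φ)
  have h5 : (T.homologyπ.hom (ShortComplex.cyclesMap φ (S.moduleCatCyclesIso.inv z))) = hcls T w := by
    rw [h2]; rfl
  rw [← h5]
  exact h4

end

section
variable {A : Type} [CommRing A] {X Y : ModuleCat.{0} A} (P : ProjectiveResolution X) (n : ℕ)

/-- The `n`-cocycles of `Hom(P, Y)`: the maps `P_n ⟶ Y` vanishing on the image of the differential
into `P_n`. -/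
noncomputable def cocy (Y : ModuleCat.{0} A) : Submodule A (P.complex.X n ⟶ Y) :=
  LinearMap.ker (Linear.leftComp A Y (P.complex.d ((ComplexShape.down ℕ).prev n) n))

variable (Y) in
/-- The part of the cochain complex `Hom(P, Y)` around degree `n`, as a short complex of modules. -/
noncomputable def dualSC : ShortComplex (ModuleCat.{0} A) :=
  (((((linearYoneda A (ModuleCat.{0} A)).obj Y).rightOp.mapHomologicalComplex _).obj P.complex).sc n).unop

variable (Y) in
/-- The derived-functor `Ext A _ n` evaluated at `(X, Y)` is the cohomology of `Hom(P, Y)` in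
degree `n`. -/
noncomputable def oldIso : ((Ext A (ModuleCat.{0} A) n).obj (op X)).obj Y ≅ (dualSC (Y := Y) P n).homology :=
  (P.isoLeftDerivedObj ((linearYoneda A (ModuleCat.{0} A)).obj Y).rightOp n).unop.symm ≪≫
    (dualSC (Y := Y) P n).homologyOpIso.unop.symm

/-- The map `Hom(P, Y) ⟶ Hom(P', Y)` of short complexes induced by a chain map `P' ⟶ P`. -/
noncomputable def dualMap {X' : ModuleCat.{0} A} {P' : ProjectiveResolution X'} (φ : P'.complex ⟶ P.complex) :
   dualSC (Y := Y) P n ⟶ dualSC (Y := Y) P' n :=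
  ShortComplex.unopMap ((HomologicalComplex.shortComplexFunctor _ _ n).map
   ((((linearYoneda A (ModuleCat.{0} A)).obj Y).rightOp.mapHomologicalComplex _).map φ))

/-- Horizontal pasting of two commutative squares. -/
lemma comp_sq {C : Type*} [Category* C] {X₁ X₂ X₃ Y₁ Y₂ Y₃ : C} {m : X₁ ⟶ Y₁} {m' : X₂ ⟶ Y₂}
    {m'' : X₃ ⟶ Y₃} {p : X₁ ⟶ X₂} {p' : X₂ ⟶ X₃} {q : Y₁ ⟶ Y₂} {q' : Y₂ ⟶ Y₃}
    (h : m ≫ q = p ≫ m') (h' : m' ≫ q' = p' ≫ m'') : m ≫ q ≫ q' = (p ≫ p') ≫ m'' := by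
  rw [reassoc_of% h, h', Category.assoc]

lemma oldIso_nat {X' : ModuleCat.{0} A} (g : X' ⟶ X) {P' : ProjectiveResolution X'}
    (φ : P'.complex ⟶ P.complex) (hφ : φ.f 0 ≫ P.π.f 0 = P'.π.f 0 ≫ g) :
    ((Ext A (ModuleCat.{0} A) n).map g.op).app Y ≫ (oldIso Y P' n).hom =
      (oldIso Y P n).hom ≫ ShortComplex.homologyMap (dualMap P n φ) := by
  have h1 := P'.isoLeftDerivedObj_inv_naturality g P φ hφ
    ((linearYoneda A (ModuleCat.{0} A)).obj Y).rightOp n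
  have h2 := ShortComplex.homologyOpIso_inv_naturality (dualMap (Y := Y) P n φ)
  have h1' := congrArg Quiver.Hom.unop h1
  have h2' := congrArg Quiver.Hom.unop h2
  exact comp_sq h1' h2'.symm


variable (Y) in
/-- The class of a cocycle in the derived-functor `Ext A _ n`. -/
noncomputable def oldCls : cocy P n Y →ₗ[A] ((Ext A (ModuleCat.{0} A) n).obj (op X)).obj Y :=
  (oldIso Y P n).inv.hom ∘ₗ hcls (dualSC Y P n)

lemma oldCls_surjective : Function.Surjective (oldCls Y P n) :=
  ((ModuleCat.epi_iff_surjective (oldIso Y P n).inv).1 inferInstance).comp (hcls_surjective _)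

lemma oldCls_eq_zero_iff (z : cocy P n Y) : oldCls Y P n z = 0 ↔
    ∃ g : P.complex.X ((ComplexShape.down ℕ).next n) ⟶ Y, P.complex.d n _ ≫ g = z.1 := by
  refine Iff.trans ?_ (hcls_eq_zero_iff (dualSC Y P n) z)
  exact map_eq_zero_iff (oldIso Y P n).inv.hom
    ((ModuleCat.mono_iff_injective (oldIso Y P n).inv).1 inferInstance)

lemma mem_cocy (f : P.complex.X n ⟶ Y) :
   f ∈ cocy P n Y ↔ P.complex.d ((ComplexShape.down ℕ).prev n) n ≫ f = 0 := Iff.rfl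

lemma oldCls_map {X' : ModuleCat.{0} A} (g : X' ⟶ X) {P' : ProjectiveResolution X'}
    (φ : P'.complex ⟶ P.complex) (hφ : φ.f 0 ≫ P.π.f 0 = P'.π.f 0 ≫ g)
    (z : cocy P n Y) (w : cocy P' n Y) (h : w.1 = φ.f n ≫ z.1) :
    (((Ext A (ModuleCat.{0} A) n).map g.op).app Y).hom (oldCls Y P n z) = oldCls Y P' n w := by
  have h1 := congrArg (fun f => f.hom (oldCls Y P n z)) (oldIso_nat (Y := Y) P n g φ hφ)
  have h2 : (oldIso Y P n).hom (oldCls Y P n z) = hcls (dualSC Y P n) z :=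
    (oldIso Y P n).inv_hom_id_apply _
  have h3 : (oldIso Y P' n).hom (oldCls Y P' n w) = hcls (dualSC Y P' n) w :=
    (oldIso Y P' n).inv_hom_id_apply _
  have h4 := hcls_map (dualMap (Y := Y) P n φ) z w h
  apply (ModuleCat.mono_iff_injective (oldIso Y P' n).hom).1 inferInstance
  rw [h3, ← h4, ← h2]
  exact h1

open Abelian in
lemma smul_extMk (r : A) (f : P.complex.X n ⟶ Y) (m : ℕ) (hm : n + 1 = m)
    (hf : P.complex.d m n ≫ f = 0) :
    r • P.extMk f m hm hf = P.extMk (r • f) m hm (by simp [hf]) := by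
  rw [Ext.smul_eq_comp_mk₀, P.extMk_comp_mk₀]
  congr 1

variable (Y) in
/-- The class of a cocycle in `Abelian.Ext X Y n`. -/
noncomputable def newCls : cocy P n Y →ₗ[A] Abelian.Ext X Y n where
  toFun z := P.extMk z.1 ((ComplexShape.down ℕ).prev n) (by simp) z.2
  map_add' z w := (P.add_extMk z.1 w.1 _ _ _ _).symm
  map_smul' r z := (smul_extMk P n r z.1 _ _ _).symm

lemma newCls_surjective : Function.Surjective (newCls Y P n) := by
  intro α
  obtain ⟨f, hf, h⟩ := P.extMk_surjective α ((ComplexShape.down ℕ).prev n) (by simp)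
  exact ⟨⟨f, hf⟩, h⟩

/-- In degree `0` there are no nonzero coboundaries. -/
lemma extMk_zero_eq_zero_iff (f : P.complex.X 0 ⟶ Y) (m : ℕ) (hm : 0 + 1 = m)
    (hf : P.complex.d m 0 ≫ f = 0) : P.extMk f m hm hf = 0 ↔ f = 0 := by
  rw [← P.extEquivCohomologyClass.apply_eq_iff_eq,
    ProjectiveResolution.extEquivCohomologyClass_extMk,
    ProjectiveResolution.extEquivCohomologyClass_zero,
    CochainComplex.HomComplex.CohomologyClass.mk_eq_zero_iff,
    CochainComplex.HomComplex.Cocycle.toSingleMk_mem_coboundaries_iff _ _ _ _ _ 1 (by simp)]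
  have h1 : P.cochainComplex.d (-((0 : ℕ) : ℤ)) 1 = 0 := by
    apply IsZero.eq_of_tgt
    exact CochainComplex.isZero_of_isStrictlyLE _ 0 _ (by simp)
  rw [h1]
  constructor
  · rintro ⟨g, hg⟩
    rw [← cancel_epi (P.cochainComplexXIso (-((0 : ℕ) : ℤ)) 0 rfl).hom, ← hg]
    simp
  · rintro rfl
    exact ⟨0, by simp⟩

lemma newCls_eq_zero_iff (z : cocy P n Y) : newCls Y P n z = 0 ↔
    ∃ g : P.complex.X ((ComplexShape.down ℕ).next n) ⟶ Y, P.complex.d n _ ≫ g = z.1 := by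
  rcases n with _ | n
  · have h0 : P.complex.d 0 ((ComplexShape.down ℕ).next 0) = 0 := P.complex.shape _ _ (by simp)
    simp only [h0, zero_comp, exists_const]
    exact (extMk_zero_eq_zero_iff P z.1 ((ComplexShape.down ℕ).prev 0) (by simp) z.2).trans eq_comm
  · exact P.extMk_eq_zero_iff z.1 ((ComplexShape.down ℕ).prev (n+1)) (by simp) z.2 _ (by simp)

lemma newCls_map {X' : ModuleCat.{0} A} (g : X' ⟶ X) {P' : ProjectiveResolution X'}
    (φ : ProjectiveResolution.Hom P' P g)
    (z : cocy P n Y) (w : cocy P' n Y) (h : w.1 = φ.hom.f n ≫ z.1) :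
    (Abelian.Ext.mk₀ g).comp (newCls Y P n z) (zero_add n) = newCls Y P' n w := by
  have := ProjectiveResolution.mk₀_comp_extMk z.1 ((ComplexShape.down ℕ).prev n) (by simp) z.2 φ
  refine this.trans ?_
  change _ = P'.extMk w.1 ((ComplexShape.down ℕ).prev n) (by simp) w.2
  congr 1
  exact h.symm

end

section
variable {A : Type} [CommRing A]

/-- Two quotients of the same module by the same kernel are isomorphic. -/
lemma exists_equiv_of_surjective {C U V : Type*} [AddCommGroup C] [AddCommGroup U] [AddCommGroup V]
    [Module A C] [Module A U] [Module A V] (u : C →ₗ[A] U) (v : C →ₗ[A] V)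
    (hu : Function.Surjective u) (hv : Function.Surjective v) (h : ∀ c, u c = 0 ↔ v c = 0) :
    ∃ e : U ≃ₗ[A] V, ∀ c, e (u c) = v c := by
  have hk : LinearMap.ker u = LinearMap.ker v := by
    ext c
    exact h c
  refine ⟨(u.quotKerEquivOfSurjective hu).symm ≪≫ₗ
    (Submodule.quotEquivOfEq _ _ hk) ≪≫ₗ (v.quotKerEquivOfSurjective hv), fun c => ?_⟩
  have : (u.quotKerEquivOfSurjective hu).symm (u c) = Submodule.Quotient.mk c := by
    rw [LinearEquiv.symm_apply_eq]
    rfl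
  simp only [LinearEquiv.trans_apply, this]
  rfl

/-- The derived-functor `Ext` from which `localCohomology` is built agrees with `Abelian.Ext`,
linearly and naturally in the first variable: both are cocycles of a projective resolution modulo
coboundaries. -/
theorem exists_extEquiv (Y : ModuleCat.{0} A) (n : ℕ) :
    ∃ e : ∀ X : ModuleCat.{0} A,
      ((Ext A (ModuleCat.{0} A) n).obj (op X)).obj Y ≃ₗ[A] Abelian.Ext X Y n,
    ∀ (X X' : ModuleCat.{0} A) (g : X' ⟶ X) (z : ((Ext A (ModuleCat.{0} A) n).obj (op X)).obj Y),
      e X' ((((Ext A (ModuleCat.{0} A) n).map g.op).app Y).hom z) =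
        (Abelian.Ext.mk₀ g).comp (e X z) (zero_add n) := by
  have key (X : ModuleCat.{0} A) := exists_equiv_of_surjective
    (oldCls Y (ProjectiveResolution.of X) n) (newCls Y (ProjectiveResolution.of X) n)
    (oldCls_surjective _ n) (newCls_surjective _ n)
    (fun c => (oldCls_eq_zero_iff _ n c).trans (newCls_eq_zero_iff _ n c).symm)
  choose e he using key
  refine ⟨e, fun X X' g z => ?_⟩
  obtain ⟨z, rfl⟩ := oldCls_surjective (ProjectiveResolution.of X) n z
  let P := ProjectiveResolution.of X
  let P' := ProjectiveResolution.of X'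
  let φ : P'.complex ⟶ P.complex := ProjectiveResolution.lift g P' P
  have hφ : φ.f 0 ≫ P.π.f 0 = P'.π.f 0 ≫ g := ProjectiveResolution.lift_commutes_zero g P' P
  let Φ : ProjectiveResolution.Hom P' P g :=
    { hom := φ
      hom_f_zero_comp_π_f_zero := by
        rw [hφ]; simp }
  have hz : P.complex.d ((ComplexShape.down ℕ).prev n) n ≫ z.1 = 0 := z.2
  let w : cocy P' n Y := ⟨φ.f n ≫ z.1, by
    rw [mem_cocy, ← φ.comm_assoc, hz, comp_zero]⟩
  rw [he X z]
  refine Eq.trans ?_ (newCls_map P n g Φ z w rfl).symm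
  refine Eq.trans ?_ (he X' w)
  exact congrArg (e X') (oldCls_map P n g φ hφ z w rfl)

end

/-! ### Local cohomology as a direct limit of `Ext` groups -/

section
variable {A : Type} [CommRing A]

/-- The cyclic module `A/L` as an object of the category of modules. -/
noncomputable abbrev quo (L : Ideal A) : ModuleCat.{0} A := ModuleCat.of A (A ⧸ L)

/-- The projection `A/L ⟶ A/L'`. -/
noncomputable def qm {L L' : Ideal A} (h : L ≤ L') : quo L ⟶ quo L' :=
  ModuleCat.ofHom (Submodule.mapQ L L' LinearMap.id h)

/-- The pullback `Ext^n(X, M) → Ext^n(X', M)` along `g : X' ⟶ X`. -/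
noncomputable def pre {X X' : ModuleCat.{0} A} (g : X' ⟶ X) (M : ModuleCat.{0} A) (n : ℕ) :
    Abelian.Ext X M n →ₗ[A] Abelian.Ext X' M n where
  toFun x := (Abelian.Ext.mk₀ g).comp x (zero_add n)
  map_add' x y := by simp
  map_smul' r x := by simp

lemma pre_comp {X X' X'' : ModuleCat.{0} A} (g : X' ⟶ X) (g' : X'' ⟶ X') (M : ModuleCat.{0} A)
    (n : ℕ) (x : Abelian.Ext X M n) : pre g' M n (pre g M n x) = pre (g' ≫ g) M n x := by
  simp [pre]

lemma pre_smul {X X' : ModuleCat.{0} A} (g : X' ⟶ X) (r : A) (M : ModuleCat.{0} A)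
    (n : ℕ) (x : Abelian.Ext X M n) : pre (r • g) M n x = r • pre g M n x := by
  simp [pre, Abelian.Ext.mk₀_smul]

lemma pre_id {X : ModuleCat.{0} A} (M : ModuleCat.{0} A)
    (n : ℕ) (x : Abelian.Ext X M n) : pre (𝟙 X) M n x = x := by
  simp [pre]

lemma qm_comp {L L' L'' : Ideal A} (h : L ≤ L') (h' : L' ≤ L'') :
    qm h ≫ qm h' = qm (h.trans h') := by
  apply ModuleCat.hom_ext
  apply LinearMap.ext
  intro x
  obtain ⟨x, rfl⟩ := Submodule.Quotient.mk_surjective _ x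
  rfl

/-- `H^n_J(M)` is the direct limit of the modules `Ext^n(A/J^k, M)`, spelled out on elements: `ι k`
is the map from the `k`-th stage to the limit. -/
theorem exists_lcMap (J : Ideal A) (n : ℕ) (M : ModuleCat.{0} A) :
    ∃ ι : ∀ k : ℕ, Abelian.Ext (quo (J ^ k)) M n →ₗ[A] (localCohomology J n).obj M,
      (∀ y, ∃ k x, ι k x = y) ∧
      (∀ k l (h : k ≤ l) x, ι l (pre (qm (Ideal.pow_le_pow_right h)) M n x) = ι k x) ∧
      (∀ k x, ι k x = 0 → ∃ l, ∃ h : k ≤ l, pre (qm (Ideal.pow_le_pow_right h)) M n x = 0) := by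
  obtain ⟨e, he⟩ := exists_extEquiv M n
  have : HasColimit (localCohomology.diagram (localCohomology.idealPowersDiagram J) n) :=
    inferInstance
  let F := localCohomology.diagram (localCohomology.idealPowersDiagram J) n
  let ev := (evaluation (ModuleCat.{0} A) (ModuleCat.{0} A)).obj M
  let c : Cocone (F ⋙ ev) := ev.mapCocone (colimit.cocone F)
  let hc : IsColimit c := isColimitOfPreserves ev (colimit.isColimit F)
  let j (k : ℕ) : ℕᵒᵖᵒᵖ := op (op k)
  let tr {k l : ℕ} (h : k ≤ l) : j k ⟶ j l := (homOfLE h).op.op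
  let ι (k : ℕ) : Abelian.Ext (quo (J ^ k)) M n →ₗ[A] (localCohomology J n).obj M :=
    (c.ι.app (j k)).hom ∘ₗ (e (quo (J ^ k))).symm.toLinearMap
  have hmap (k l : ℕ) (h : k ≤ l) (z : (F ⋙ ev).obj (j k)) :
      e (quo (J ^ l)) (((F ⋙ ev).map (tr h)).hom z) =
        pre (qm (Ideal.pow_le_pow_right h)) M n (e (quo (J ^ k)) z) :=
    he _ _ (qm (Ideal.pow_le_pow_right h)) z
  refine ⟨ι, fun y => ?_, fun k l h x => ?_, fun k x hx => ?_⟩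
  · obtain ⟨a, x, hx⟩ := Concrete.isColimit_exists_rep _ hc y
    refine ⟨a.unop.unop, e _ x, ?_⟩
    refine Eq.trans ?_ hx
    exact congrArg (c.ι.app a).hom ((e _).symm_apply_apply x)
  · have h1 := hmap k l h ((e (quo (J ^ k))).symm x)
    rw [LinearEquiv.apply_symm_apply] at h1
    have h2 := congrArg (fun f => f.hom ((e (quo (J ^ k))).symm x)) (c.w (tr h))
    refine Eq.trans ?_ h2
    refine congrArg (c.ι.app (j l)).hom ?_
    rw [← h1]
    exact (e (quo (J ^ l))).symm_apply_apply _
  · have h0 : (c.ι.app (j k)).hom ((e (quo (J ^ k))).symm x) = (c.ι.app (j k)).hom 0 := by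
      rw [map_zero]
      exact hx
    obtain ⟨b, f, g, hfg⟩ := Concrete.isColimit_exists_of_rep_eq _ hc _ _ h0
    have hb : k ≤ b.unop.unop := leOfHom f.unop.unop
    refine ⟨b.unop.unop, hb, ?_⟩
    have h1 := hmap k _ hb ((e (quo (J ^ k))).symm x)
    rw [LinearEquiv.apply_symm_apply] at h1
    rw [← h1]
    have h2 : ((F ⋙ ev).map (tr hb)).hom ((e (quo (J ^ k))).symm x) = 0 :=
      hfg.trans (map_zero ((F ⋙ ev).map g).hom)
    rw [h2]
    exact map_zero (e _)

end

/-! ### Elements killed by a multiplicative set -/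

section
variable {A : Type} [CommRing A]

/-- The pushforward `Ext^n(X, M) → Ext^n(X, N)` along `f : M ⟶ N`. -/
noncomputable def post {M N : ModuleCat.{0} A} (f : M ⟶ N) (X : ModuleCat.{0} A) (n : ℕ) :
    Abelian.Ext X M n →ₗ[A] Abelian.Ext X N n where
  toFun x := x.comp (Abelian.Ext.mk₀ f) (add_zero n)
  map_add' x y := by simp
  map_smul' r x := by simp

lemma post_comp {M N K : ModuleCat.{0} A} (f : M ⟶ N) (g : N ⟶ K) (X : ModuleCat.{0} A) (n : ℕ)
    (x : Abelian.Ext X M n) : post g X n (post f X n x) = post (f ≫ g) X n x := by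
  simp [post]

lemma post_id {M : ModuleCat.{0} A} (X : ModuleCat.{0} A) (n : ℕ)
    (x : Abelian.Ext X M n) : post (𝟙 M) X n x = x := by
  simp [post]

lemma pre_post {X X' M N : ModuleCat.{0} A} (g : X' ⟶ X) (f : M ⟶ N) (n : ℕ)
    (x : Abelian.Ext X M n) : pre g N n (post f X n x) = post f X' n (pre g M n x) := by
  change (Abelian.Ext.mk₀ g).comp (x.comp (Abelian.Ext.mk₀ f) (add_zero n)) (zero_add n) =
    ((Abelian.Ext.mk₀ g).comp x (zero_add n)).comp (Abelian.Ext.mk₀ f) (add_zero n)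
  rw [Abelian.Ext.comp_assoc]
  omega

/-- Every element of `H^n_J(M)` is killed by an element of `S`, stated at the finite levels
`Ext^n(A/J^k, M)` of the direct limit (see `lcTorsion_iff`). For `S = ⊥` this says that
`H^n_J(M) = 0`, and for the complement of a prime that this prime is not in its support. -/
def LCTorsion (S : Submonoid A) (J : Ideal A) (n : ℕ) (M : ModuleCat.{0} A) : Prop :=
  ∀ k (x : Abelian.Ext (quo (J ^ k)) M n), ∃ s ∈ S, ∃ l, ∃ h : k ≤ l,
    pre (qm (Ideal.pow_le_pow_right h)) M n (s • x) = 0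

lemma lcTorsion_iff (S : Submonoid A) (J : Ideal A) (n : ℕ) (M : ModuleCat.{0} A) :
    LCTorsion S J n M ↔ ∀ y : (localCohomology J n).obj M, ∃ s ∈ S, s • y = 0 := by
  obtain ⟨ι, h1, h2, h3⟩ := exists_lcMap J n M
  constructor
  · intro hT y
    obtain ⟨k, x, rfl⟩ := h1 y
    obtain ⟨s, hs, l, h, hx⟩ := hT k x
    refine ⟨s, hs, ?_⟩
    rw [← map_smul, ← h2 k l h, hx, map_zero]
  · intro hT k x
    obtain ⟨s, hs, hx⟩ := hT (ι k x)
    rw [← map_smul] at hx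
    obtain ⟨l, h, hx⟩ := h3 _ _ hx
    exact ⟨s, hs, l, h, hx⟩

lemma LCTorsion.of_iso {S : Submonoid A} {J : Ideal A} {n : ℕ} {M N : ModuleCat.{0} A}
    (e : M ≅ N) (hM : LCTorsion S J n M) : LCTorsion S J n N := by
  intro k x
  obtain ⟨s, hs, l, h, hx⟩ := hM k (post e.inv _ n x)
  refine ⟨s, hs, l, h, ?_⟩
  have h1 : post e.hom _ n (post e.inv _ n x) = x := by
    rw [post_comp, e.inv_hom_id, post_id]
  rw [← h1, ← map_smul, pre_post, hx, map_zero]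

/-- The property passes to the middle term of a short exact sequence, by the long exact sequence
of `Ext`. -/
lemma LCTorsion.middle {S : Submonoid A} {J : Ideal A} {n : ℕ} {T : ShortComplex (ModuleCat.{0} A)}
    (hT : T.ShortExact) (h1 : LCTorsion S J n T.X₁) (h3 : LCTorsion S J n T.X₃) :
    LCTorsion S J n T.X₂ := by
  intro k x
  obtain ⟨s, hs, l, h, hx⟩ := h3 k (post T.g _ n x)
  rw [← map_smul, pre_post] at hx
  obtain ⟨x₁, hx₁⟩ := Abelian.Ext.covariant_sequence_exact₂ _ hT _ hx
  obtain ⟨s', hs', l', h', hx'⟩ := h1 l x₁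
  refine ⟨s' * s, S.mul_mem hs' hs, l', h.trans h', ?_⟩
  have h4 := congrArg (post T.f _ n) hx'
  rw [← pre_post, map_zero, map_smul, map_smul] at h4
  have h5 : post T.f _ n x₁ =
    pre (qm (Ideal.pow_le_pow_right h)) _ n (s • x) := hx₁
  rw [h5, pre_comp, qm_comp, ← map_smul, smul_smul] at h4
  exact h4

variable [IsNoetherianRing A]

/-- For finite `X` over a Noetherian ring, `Ext^δ(X, _)` commutes with increasing unions as far as
surjectivity is concerned: every class comes from a stage. Dimension shifting along a finite
presentation `P → X` reduces this to `Hom`. -/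
lemma exists_post_eq {N : ModuleCat.{0} A} (F : ℕ → Submodule A N) (hF : Monotone F)
    (hU : ∀ x, ∃ i, x ∈ F i) (δ : ℕ) (X : ModuleCat.{0} A) [Module.Finite A X]
    (x : Abelian.Ext X N δ) :
    ∃ i, ∃ y : Abelian.Ext X (ModuleCat.of A (F i)) δ,
      post (ModuleCat.ofHom (F i).subtype) X δ y = x := by
  induction δ generalizing X with
  | zero =>
    obtain ⟨g, rfl⟩ := Abelian.Ext.homEquiv₀.symm.surjective x
    have hfg : (LinearMap.range g.hom).FG := by
      rw [LinearMap.range_eq_map]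
      exact Module.Finite.fg_top.map _
    obtain ⟨s, hs⟩ := hfg
    have : ∃ i, ∀ y ∈ s, y ∈ F i := by
      choose i hi using hU
      exact ⟨s.sup i, fun y hy => hF (Finset.le_sup hy) (hi y)⟩
    obtain ⟨i, hi⟩ := this
    have hr : LinearMap.range g.hom ≤ F i := by
      rw [← hs, Submodule.span_le]
      exact hi
    refine ⟨i, Abelian.Ext.mk₀ (ModuleCat.ofHom
      (g.hom.codRestrict (F i) fun y => hr ⟨y, rfl⟩)), ?_⟩
    refine (Abelian.Ext.mk₀_comp_mk₀ _ _).trans ?_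
    rfl
  | succ n ih =>
    obtain ⟨P, _, _, _, _, f, surjf⟩ := Module.exists_finite_presentation A X
    let exac := LinearMap.shortExact_shortComplexKer surjf
    obtain ⟨y, rfl⟩ := precomp_extClass_surjective_of_projective_X₂ N exac n x
    have : Module.Finite A f.shortComplexKer.X₁ :=
      inferInstanceAs (Module.Finite A (LinearMap.ker f))
    obtain ⟨i, y, rfl⟩ := ih f.shortComplexKer.X₁ y
    refine ⟨i, exac.extClass.comp y (add_comm 1 n), ?_⟩
    exact Abelian.Ext.comp_assoc _ _ _ (add_comm 1 n) (add_zero n) (by omega)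

/-- The property passes to increasing unions. -/
lemma LCTorsion.union {S : Submonoid A} {J : Ideal A} {n : ℕ} {N : ModuleCat.{0} A}
    (F : ℕ → Submodule A N) (hF : Monotone F)
    (hU : ∀ x, ∃ i, x ∈ F i) (h : ∀ i, LCTorsion S J n (ModuleCat.of A (F i))) :
    LCTorsion S J n N := by
  intro k x
  obtain ⟨i, y, rfl⟩ := exists_post_eq F hF hU n _ x
  obtain ⟨s, hs, l, hl, hy⟩ := h i k y
  refine ⟨s, hs, l, hl, ?_⟩
  rw [← map_smul, pre_post, hy, map_zero]

end

/-! ### Permutable regular sequences and their powers -/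

section
variable {A : Type} [CommRing A]

/-- The ideal generated by the powers `x j ^ e j`, `j ∈ S`. -/
def powIdeal (x : ℕ → A) (e : ℕ → ℕ) (S : Finset ℕ) : Ideal A :=
  Ideal.span ((fun j => x j ^ e j) '' (S : Set ℕ))

/-- The family `(x j)`, `j ∈ U`, is regular in every order: each `x i` is a nonzerodivisor modulo the
ideal generated by any set `S` of other members. -/
def PermRegular (x : ℕ → A) (U : Finset ℕ) : Prop :=
  ∀ S ⊆ U, ∀ i ∈ U, i ∉ S → ∀ a, x i * a ∈ Ideal.span (x '' (S : Set ℕ)) →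
    a ∈ Ideal.span (x '' (S : Set ℕ))

lemma powIdeal_insert (x : ℕ → A) (e : ℕ → ℕ) (S : Finset ℕ) (j : ℕ) :
    powIdeal x e (insert j S) = powIdeal x e S ⊔ Ideal.span {x j ^ e j} := by
  rw [powIdeal, Finset.coe_insert, Set.image_insert_eq, Ideal.span_insert, sup_comm, powIdeal]

lemma powIdeal_congr (x : ℕ → A) {e e' : ℕ → ℕ} {S : Finset ℕ} (h : ∀ j ∈ S, e j = e' j) :
    powIdeal x e S = powIdeal x e' S := by
  rw [powIdeal, powIdeal]
  congr 1
  apply Set.image_congr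
  intro j hj
  rw [h j hj]

/-- Isolates the generator with index `j`. -/
lemma powIdeal_split (x : ℕ → A) {e e' : ℕ → ℕ} {S : Finset ℕ} {j : ℕ} (hj : j ∈ S)
    (h : ∀ k ∈ S, k ≠ j → e k = e' k) :
    powIdeal x e' S = powIdeal x e (S.erase j) ⊔ Ideal.span {x j ^ e' j} := by
  conv_lhs => rw [← Finset.insert_erase hj]
  rw [powIdeal_insert, powIdeal_congr x (e := e) (e' := e') (S := S.erase j)]
  intro k hk
  exact h k (Finset.mem_of_mem_erase hk) (Finset.ne_of_mem_erase hk)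

lemma mem_sup_span_singleton {K : Ideal A} {y a : A} :
    a ∈ K ⊔ Ideal.span {y} ↔ ∃ b, a - y * b ∈ K := by
  rw [Submodule.mem_sup]
  constructor
  · rintro ⟨k, hk, z, hz, rfl⟩
    obtain ⟨b, rfl⟩ := Ideal.mem_span_singleton'.1 hz
    exact ⟨b, by convert hk using 1; ring⟩
  · rintro ⟨b, hb⟩
    exact ⟨_, hb, y * b, Ideal.mem_span_singleton.2 ⟨b, rfl⟩, by ring⟩

/-- Each `x i` is a nonzerodivisor modulo any powers of other members, by induction on the sum of the
exponents. -/
lemma PermRegular.pow {x : ℕ → A} {U : Finset ℕ} (H : PermRegular x U) (N : ℕ) :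
    ∀ (e : ℕ → ℕ) (S : Finset ℕ) (_ : S ⊆ U) (i : ℕ) (_ : i ∈ U) (_ : i ∉ S)
      (_ : ∑ j ∈ S, e j = N) (a : A), x i * a ∈ powIdeal x e S → a ∈ powIdeal x e S := by
  induction N using Nat.strong_induction_on with
  | _ N ih =>
  intro e S hS i hi hiS hN a ha
  by_cases h0 : ∃ j ∈ S, e j = 0
  · obtain ⟨j, hj, hj0⟩ := h0
    have : (1 : A) ∈ powIdeal x e S :=
      Ideal.subset_span ⟨j, hj, by simp [hj0]⟩
    rw [(Ideal.eq_top_iff_one _).2 this]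
    trivial
  by_cases h2 : ∃ j ∈ S, 2 ≤ e j
  swap
  · have h1 : ∀ j ∈ S, e j = 1 := by
      intro j hj
      push Not at h0 h2
      have := h0 j hj
      have := h2 j hj
      omega
    have : powIdeal x e S = Ideal.span (x '' (S : Set ℕ)) := by
      rw [powIdeal_congr x h1, powIdeal]
      simp
    rw [this] at ha ⊢
    exact H S hS i hi hiS a ha
  obtain ⟨j, hj, hj2⟩ := h2
  obtain ⟨m, hm⟩ : ∃ m, e j = m + 1 := ⟨e j - 1, by omega⟩
  have hij : i ∉ S.erase j := fun h => hiS (Finset.mem_of_mem_erase h)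
  have hsum : ∑ k ∈ S.erase j, e k + e j = N := by rw [Finset.sum_erase_add _ _ hj, hN]
  have hsum' (c : ℕ) : ∑ k ∈ S, Function.update e j c k = ∑ k ∈ S.erase j, e k + c := by
    rw [← Finset.sum_erase_add _ _ hj]
    congr 1
    · refine Finset.sum_congr rfl fun k hk => ?_
      rw [Function.update_of_ne (Finset.ne_of_mem_erase hk)]
    · simp
  have hsp (c : ℕ) : powIdeal x (Function.update e j c) S =
      powIdeal x e (S.erase j) ⊔ Ideal.span {x j ^ c} := by
    rw [powIdeal_split x (e := e) hj]
    · simp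
    · intro k _ hk
      rw [Function.update_of_ne hk]
  have hs0 := powIdeal_split x (e := e) (e' := e) hj (fun _ _ _ => rfl)
  rw [hs0, hm, mem_sup_span_singleton] at ha ⊢
  obtain ⟨c, hc⟩ := ha
  -- write `e j = m + 1`: lowering the exponent at `j` to `1` gives `a = x j * b` modulo the other
  -- generators; cancelling `x j` in `x i * a ≡ x j ^ (m + 1) * c` puts `x i * b` in the ideal with
  -- exponent `m` at `j`, to which the induction hypothesis applies
  have ha1 := ih _ (by rw [hsum']; omega) (Function.update e j 1) S hS i hi hiS rfl a (by
    rw [hsp, mem_sup_span_singleton]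
    exact ⟨x j ^ m * c, by convert hc using 1; ring⟩)
  rw [hsp, mem_sup_span_singleton] at ha1
  obtain ⟨b, hb⟩ := ha1
  have hb1 := ih _ (by omega) e (S.erase j) ((Finset.erase_subset _ _).trans hS) j (hS hj)
    (by simp) rfl (x i * b - x j ^ m * c) (by
      convert Ideal.sub_mem _ hc (Ideal.mul_mem_left _ (x i) hb) using 1; ring)
  have hb2 := ih _ (by rw [hsum']; omega) (Function.update e j m) S hS i hi hiS rfl b (by
    rw [hsp, mem_sup_span_singleton]
    exact ⟨c, hb1⟩)
  rw [hsp, mem_sup_span_singleton] at hb2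
  obtain ⟨d, hd⟩ := hb2
  exact ⟨d, by convert Ideal.add_mem _ hb (Ideal.mul_mem_left _ (x j) hd) using 1; ring⟩

lemma PermRegular.mem_of_pow_mul_mem {x : ℕ → A} {U : Finset ℕ} (H : PermRegular x U)
    {e : ℕ → ℕ} {S : Finset ℕ} (hS : S ⊆ U) {i : ℕ} (hi : i ∈ U) (hiS : i ∉ S)
    (c : ℕ) {a : A} (ha : x i ^ c * a ∈ powIdeal x e S) : a ∈ powIdeal x e S := by
  induction c with
  | zero => simpa using ha
  | succ c ih =>
    refine ih (H.pow _ e S hS i hi hiS rfl _ ?_)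
    convert ha using 1; ring

/-- The colon formula `(x_j ^ (e_j + b_j)) : ∏ x_j ^ b_j ⊆ (x_j ^ e_j)`, where only the exponents of
`j ∈ T` are raised. -/
lemma PermRegular.colon {x : ℕ → A} {U : Finset ℕ} (H : PermRegular x U)
    (e b : ℕ → ℕ) {S : Finset ℕ} (hS : S ⊆ U) (T : Finset ℕ) (hT : T ⊆ S) (m : A)
    (hm : (∏ j ∈ T, x j ^ b j) * m ∈ powIdeal x (fun j => e j + if j ∈ T then b j else 0) S) :
    m ∈ powIdeal x e S := by
  induction T using Finset.induction_on generalizing m with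
  | empty => simpa using hm
  | insert i T hi ih =>
    have hiS := hT (Finset.mem_insert_self i T)
    refine ih ((Finset.subset_insert i T).trans hT) m ?_
    rw [Finset.prod_insert hi, powIdeal_split x (e := fun j => e j + if j ∈ T then b j else 0) hiS,
      mem_sup_span_singleton] at hm
    · rw [powIdeal_split x (e := fun j => e j + if j ∈ T then b j else 0) hiS (fun _ _ _ => rfl),
        mem_sup_span_singleton]
      obtain ⟨d, hd⟩ := hm
      refine ⟨d, H.mem_of_pow_mul_mem ((Finset.erase_subset _ _).trans hS) (hS hiS) (by simp)
        (b i) ?_⟩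
      convert hd using 1
      simp [hi]
      ring
    · intro k _ hk
      simp [hk]

/-- A member `g i` of a permutable regular sequence is a nonzerodivisor modulo any set `S` of other
members: take an ordering that starts with `S` followed by `i`. -/
lemma regular_of_perm {n : ℕ} (g : Fin n → A)
    (hperm : ∀ σ : Equiv.Perm (Fin n), RingTheory.Sequence.IsRegular A (List.ofFn (g ∘ σ)))
    (S : Finset (Fin n)) (i : Fin n) (hi : i ∉ S) (a : A)
    (ha : g i * a ∈ Ideal.span (g '' (S : Set (Fin n)))) :
    a ∈ Ideal.span (g '' (S : Set (Fin n))) := by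
  have hlt : S.card < n := by
    have := Finset.card_lt_univ_of_notMem hi
    simpa using this
  have hcard : Fintype.card {k : Fin n // k.val < S.card} = Fintype.card {k // k ∈ S} := by
    rw [Fintype.card_coe, Fintype.card_subtype]
    have : (Finset.univ.filter fun k : Fin n => k.val < S.card) = Finset.Iio ⟨S.card, hlt⟩ := by
      ext k; simp [Fin.lt_def]
    rw [this, Fin.card_Iio]
  let e0 : {k : Fin n // k.val < S.card} ≃ {k // k ∈ S} := Fintype.equivOfCardEq hcard
  let σ : Equiv.Perm (Fin n) := e0.extendSubtype
  have hσ1 (k : Fin n) (hk : k.val < S.card) : σ k ∈ S := e0.extendSubtype_mem k hk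
  have hσ2 : σ ⟨S.card, hlt⟩ ∉ S := e0.extendSubtype_not_mem _ (by simp)
  let τ : Equiv.Perm (Fin n) := σ.trans (Equiv.swap (σ ⟨S.card, hlt⟩) i)
  have hτ1 (k : Fin n) (hk : k.val < S.card) : τ k = σ k := by
    apply Equiv.swap_apply_of_ne_of_ne
    · exact fun h => hσ2 (h ▸ hσ1 k hk)
    · exact fun h => hi (h ▸ hσ1 k hk)
  have hτ2 : τ ⟨S.card, hlt⟩ = i := Equiv.swap_apply_left _ _
  have hreg := (hperm τ).toIsWeaklyRegular.regular_mod_prev S.card (by simpa using hlt)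
  have hset : {r | r ∈ (List.ofFn (g ∘ τ)).take S.card} = g '' (S : Set (Fin n)) := by
    ext r
    simp only [Set.mem_ofPred_eq, List.mem_take_iff_getElem, Set.mem_image, Finset.mem_coe]
    constructor
    · rintro ⟨k, hk, rfl⟩
      have hk' : k < S.card := by simp at hk; omega
      refine ⟨σ ⟨k, by omega⟩, hσ1 _ hk', ?_⟩
      simp [← hτ1 ⟨k, by omega⟩ hk']
    · rintro ⟨s, hs, rfl⟩
      have : (σ.symm s).val < S.card := by
        by_contra hc
        have := e0.extendSubtype_not_mem (σ.symm s) hc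
        exact this (by simpa [σ] using hs)
      refine ⟨(σ.symm s).val, by simp [this], ?_⟩
      simp [hτ1 _ this]
  have hel : (List.ofFn (g ∘ τ))[S.card]'(by simpa using hlt) = g i := by
    simp [hτ2]
  have hid : Ideal.ofList ((List.ofFn (g ∘ τ)).take S.card) = Ideal.span (g '' (S : Set (Fin n))) := by
    rw [Ideal.ofList, hset]
  rw [hel, hid] at hreg
  have h1 : (Ideal.span (g '' (S : Set (Fin n))) • ⊤ : Submodule A A) =
     Ideal.span (g '' (S : Set (Fin n))) := by simp
  rw [isSMulRegular_iff_right_eq_zero_of_smul] at hreg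
  have h2 := hreg (Submodule.Quotient.mk a) (by
    rw [← Submodule.Quotient.mk_smul, Submodule.Quotient.mk_eq_zero, h1]
    exact ha)
  rw [Submodule.Quotient.mk_eq_zero, h1] at h2
  exact h2

/-- The extension of a finite family to `ℕ` by zero. -/
def extZero {n : ℕ} (g : Fin n → A) (j : ℕ) : A := if h : j < n then g ⟨j, h⟩ else 0

lemma permRegular_extZero {n : ℕ} (g : Fin n → A)
    (hperm : ∀ σ : Equiv.Perm (Fin n), RingTheory.Sequence.IsRegular A (List.ofFn (g ∘ σ))) :
    PermRegular (extZero g) (Finset.range n) := by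
  intro S hS i hi hiS a ha
  have hi' : i < n := Finset.mem_range.1 hi
  let S' : Finset (Fin n) := Finset.univ.filter fun k => k.val ∈ S
  have himg : extZero g '' (S : Set ℕ) = g '' (S' : Set (Fin n)) := by
    ext r
    constructor
    · rintro ⟨k, hk, rfl⟩
      have hk' : k < n := Finset.mem_range.1 (hS hk)
      exact ⟨⟨k, hk'⟩, by simpa [S'] using hk, by simp [extZero, hk']⟩
    · rintro ⟨k, hk, rfl⟩
      exact ⟨k, by simpa [S'] using hk, by simp [extZero]⟩
  rw [himg] at ha ⊢
  refine regular_of_perm g hperm S' ⟨i, hi'⟩ (by simpa [S'] using hiS) a ?_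
  simpa [extZero, hi'] using ha

end

/-! ### `Ext` of a complete intersection quotient in top degree -/

section
variable {A : Type} [CommRing A]

/-- The complex `A/L → A/L → A/L'` whose first map is multiplication by `y ∈ L'`; it is short exact if
`L' = L + (y)` and `y` is a nonzerodivisor modulo `L`. -/
noncomputable def mulSC {L L' : Ideal A} (h : L ≤ L') {y : A} (hy : y ∈ L') :
    ShortComplex (ModuleCat.{0} A) :=
  ShortComplex.mk (X₁ := quo L) (X₂ := quo L) (X₃ := quo L') (y • 𝟙 (quo L)) (qm h) (by
    apply ModuleCat.hom_ext
    apply LinearMap.ext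
    intro z
    obtain ⟨z, rfl⟩ := Submodule.Quotient.mk_surjective _ z
    change (Submodule.Quotient.mk (y * z) : A ⧸ L') = 0
    rw [Submodule.Quotient.mk_eq_zero]
    exact Ideal.mul_mem_right _ _ hy)

lemma mulSC_shortExact {L L' : Ideal A} (h : L ≤ L') {y : A} (hy : y ∈ L')
    (hL' : L' = L ⊔ Ideal.span {y}) (hreg : ∀ a, y * a ∈ L → a ∈ L) :
    (mulSC h hy).ShortExact := by
  apply ShortComplex.ShortExact.mk'
  · rw [ShortComplex.moduleCat_exact_iff]
    intro z hz
    obtain ⟨z, rfl⟩ := Submodule.Quotient.mk_surjective _ z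
    have hz' : (Submodule.Quotient.mk z : A ⧸ L') = 0 := hz
    rw [Submodule.Quotient.mk_eq_zero, hL', mem_sup_span_singleton] at hz'
    obtain ⟨b, hb⟩ := hz'
    refine ⟨Submodule.Quotient.mk b, ?_⟩
    change (Submodule.Quotient.mk (y * b) : A ⧸ L) = Submodule.Quotient.mk z
    exact ((Submodule.Quotient.eq _).2 hb).symm
  · refine (ModuleCat.mono_iff_injective (mulSC h hy).f).2 ?_
    refine (injective_iff_map_eq_zero (mulSC h hy).f.hom).2 fun z hz => ?_
    obtain ⟨z, rfl⟩ := Submodule.Quotient.mk_surjective _ z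
    have hz' : (Submodule.Quotient.mk (y * z) : A ⧸ L) = 0 := hz
    rw [Submodule.Quotient.mk_eq_zero] at hz'
    change (Submodule.Quotient.mk z : A ⧸ L) = 0
    rw [Submodule.Quotient.mk_eq_zero]
    exact hreg z hz'
  · refine (ModuleCat.epi_iff_surjective (mulSC h hy).g).2 fun z => ?_
    obtain ⟨z, rfl⟩ := Submodule.Quotient.mk_surjective _ z
    exact ⟨Submodule.Quotient.mk z, rfl⟩

/-- The morphism of complexes `mulSC` induced by the projections, with `y = c * w`: it is
multiplication by `c` on the first term. -/
noncomputable def mulSCMap {L L' M M' : Ideal A} (h : L ≤ L') {y : A} (hy : y ∈ L')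
    (hM : M ≤ M') {w : A} (hw : w ∈ M') (h1 : L ≤ M) (h2 : L' ≤ M') (c : A) (hc : y = c * w) :
    mulSC h hy ⟶ mulSC hM hw where
  τ₁ := c • qm h1
  τ₂ := qm h1
  τ₃ := qm h2
  comm₁₂ := by
    change (c • qm h1) ≫ (w • 𝟙 (quo M)) = (y • 𝟙 (quo L)) ≫ qm h1
    simp [hc, smul_smul, mul_comm]
  comm₂₃ := by
    change qm h1 ≫ qm hM = qm h ≫ qm h2
    rw [qm_comp, qm_comp]

lemma qm_id (L : Ideal A) (h : L ≤ L) : qm h = 𝟙 (quo L) := by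
  apply ModuleCat.hom_ext
  apply LinearMap.ext
  intro z
  obtain ⟨z, rfl⟩ := Submodule.Quotient.mk_surjective _ z
  rfl

/-- The ideal `(x_0 ^ k, …, x_{i-1} ^ k)`. -/
abbrev Jk (x : ℕ → A) (k i : ℕ) : Ideal A := powIdeal x (fun _ => k) (Finset.range i)

lemma Jk_succ (x : ℕ → A) (k i : ℕ) : Jk x k (i + 1) = Jk x k i ⊔ Ideal.span {x i ^ k} := by
  rw [Jk, Finset.range_add_one, powIdeal_insert]

lemma Jk_zero (x : ℕ → A) (k : ℕ) : Jk x k 0 = ⊥ := by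
  simp [Jk, powIdeal]

lemma Jk_mono (x : ℕ → A) {k l : ℕ} (h : k ≤ l) (i : ℕ) : Jk x l i ≤ Jk x k i := by
  rw [Jk, powIdeal, Ideal.span_le]
  rintro _ ⟨j, hj, rfl⟩
  have h1 : x j ^ k ∈ Jk x k i := Ideal.subset_span ⟨j, hj, rfl⟩
  exact Ideal.mem_of_dvd _ (pow_dvd_pow _ h) h1

lemma projective_quo_bot {L : Ideal A} (hL : L = ⊥) : Projective (quo L) := by
  have : Module.Projective A (A ⧸ L) :=
    Module.Projective.of_equiv (Submodule.quotEquivOfEqBot L hL).symm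
  exact (IsProjective.iff_projective (A ⧸ L)).1 this

/-- The sequence `0 → A/L → A/L → A/(L + (x_i ^ k)) → 0` for `L = (x_0 ^ k, …, x_{i-1} ^ k)`. -/
lemma koszul_step {x : ℕ → A} {U : Finset ℕ} (H : PermRegular x U) {i : ℕ}
    (hU : Finset.range (i + 1) ⊆ U) (k : ℕ) :
    (mulSC (L := Jk x k i) (L' := Jk x k (i + 1)) (y := x i ^ k) (by rw [Jk_succ]; exact le_sup_left)
      (by rw [Jk_succ]; exact Ideal.mem_sup_right (Ideal.mem_span_singleton_self _))).ShortExact :=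
  mulSC_shortExact _ _ (Jk_succ x k i) fun a ha =>
    H.mem_of_pow_mul_mem ((Finset.range_subset_range.2 (Nat.le_succ i)).trans hU) (hU (by simp)) (by simp) k ha

/-- `A / (x_0 ^ k, …, x_{i-1} ^ k)` has projective dimension at most `i`. -/
lemma koszul_pd {x : ℕ → A} {U : Finset ℕ} (H : PermRegular x U) (k i : ℕ)
    (hU : Finset.range i ⊆ U) : HasProjectiveDimensionLT (quo (Jk x k i)) (i + 1) := by
  induction i with
  | zero =>
    rw [zero_add, ← projective_iff_hasProjectiveDimensionLT_one]
    exact projective_quo_bot (Jk_zero x k)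
  | succ i ih =>
    have h1 : HasProjectiveDimensionLT (quo (Jk x k i)) (i + 1) :=
      ih ((Finset.range_subset_range.2 (Nat.le_succ i)).trans hU)
    exact (koszul_step H hU k).hasProjectiveDimensionLT_X₃ (i + 1) h1
      (hasProjectiveDimensionLT_of_ge (quo (Jk x k i)) (i + 1) (i + 1 + 1) (by omega))

lemma mem_ideal_smul_sup {M : Type*} [AddCommGroup M] [Module A M] (L : Ideal A) (y : A) (m : M) :
    m ∈ (L ⊔ Ideal.span {y}) • (⊤ : Submodule A M) ↔ ∃ m', m - y • m' ∈ L • (⊤ : Submodule A M) := by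
  rw [Submodule.sup_smul, Submodule.ideal_span_singleton_smul, Submodule.mem_sup]
  constructor
  · rintro ⟨k, hk, z, hz, rfl⟩
    obtain ⟨m', -, rfl⟩ := Submodule.mem_smul_pointwise_iff_exists _ _ _ |>.1 hz
    exact ⟨m', by simpa using hk⟩
  · rintro ⟨m', hm'⟩
    exact ⟨_, hm', y • m', Submodule.smul_mem_pointwise_smul _ _ _ trivial, by simp⟩

/-- `Ext^i(A/L_k, M) ≅ M / L_k M` for `L_k = (x_0 ^ k, …, x_{i-1} ^ k)`, with the projections
`A/L_l → A/L_k` inducing multiplication by `(x_0 ⋯ x_{i-1}) ^ (l - k)`. The isomorphism is built one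
element at a time from the connecting maps of `koszul_step`, the last `Ext` group of the long exact
sequence vanishing by `koszul_pd`. -/
theorem koszul_ext {x : ℕ → A} {U : Finset ℕ} (H : PermRegular x U) (i : ℕ)
    (hU : Finset.range i ⊆ U) (M : ModuleCat.{0} A) :
    ∃ θ : ∀ k : ℕ, M →ₗ[A] Abelian.Ext (quo (Jk x k i)) M i,
      (∀ k, Function.Surjective (θ k)) ∧
      (∀ k m, θ k m = 0 ↔ m ∈ Jk x k i • (⊤ : Submodule A M)) ∧
      (∀ k l (h : k ≤ l) m, pre (qm (Jk_mono x h i)) M i (θ k m) =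
        θ l ((∏ j ∈ Finset.range i, x j) ^ (l - k) • m)) := by
  induction i with
  | zero =>
    let ψ (k : ℕ) (m : M) : quo (Jk x k 0) ⟶ M := ModuleCat.ofHom
      ((Jk x k 0).liftQ (LinearMap.toSpanSingleton A M m) (by rw [Jk_zero]; exact bot_le))
    have hψ (k : ℕ) (m : M) (a : A) : (ψ k m).hom (Submodule.Quotient.mk a) = a • m := rfl
    have hext (k : ℕ) {f g : quo (Jk x k 0) ⟶ M}
        (h : f.hom (Submodule.Quotient.mk 1) = g.hom (Submodule.Quotient.mk 1)) : f = g := by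
      apply ModuleCat.hom_ext
      apply Submodule.linearMap_qext
      apply LinearMap.ext_ring
      exact h
    refine ⟨fun k =>
      { toFun := fun m => Abelian.Ext.mk₀ (ψ k m)
        map_add' := fun m m' => ?_
        map_smul' := fun r m => ?_ }, ?_, ?_, ?_⟩
    · rw [← Abelian.Ext.mk₀_add]
      congr 1
      apply hext
      exact (hψ k _ 1).trans ((smul_add (1 : A) m m').trans
        (congrArg₂ (· + ·) (hψ k m 1) (hψ k m' 1)).symm)
    · rw [RingHom.id_apply, ← Abelian.Ext.mk₀_smul]
      congr 1
      apply hext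
      exact (hψ k _ 1).trans ((smul_comm (1 : A) r m).trans
        (congrArg (r • ·) (hψ k m 1)).symm)
    · intro k α
      obtain ⟨g, rfl⟩ := Abelian.Ext.homEquiv₀.symm.surjective α
      refine ⟨g.hom (Submodule.Quotient.mk 1), ?_⟩
      change Abelian.Ext.mk₀ (ψ k _) = Abelian.Ext.mk₀ g
      congr 1
      apply hext
      rw [hψ, one_smul]
    · intro k m
      change Abelian.Ext.mk₀ (ψ k m) = 0 ↔ _
      have h0 : Jk x k 0 • (⊤ : Submodule A M) = ⊥ := by rw [Jk_zero, Submodule.bot_smul]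
      rw [h0, Submodule.mem_bot, Abelian.Ext.mk₀_eq_zero_iff]
      constructor
      · intro h
        have := hψ k m 1
        rw [h, one_smul] at this
        exact this.symm
      · intro h
        apply hext
        rw [hψ, h, smul_zero]
        rfl
    · intro k l h m
      change (Abelian.Ext.mk₀ _).comp (Abelian.Ext.mk₀ (ψ k m)) (zero_add 0) = Abelian.Ext.mk₀ (ψ l _)
      rw [Abelian.Ext.mk₀_comp_mk₀]
      congr 1
      apply hext
      simp only [hψ, Finset.range_zero, Finset.prod_empty, one_pow, one_smul]
      exact (hψ k m 1).trans (one_smul _ _)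
  | succ i ih =>
    have hU' := (Finset.range_subset_range.2 (Nat.le_succ i)).trans hU
    obtain ⟨θ, h1, h2, h3⟩ := ih hU'
    refine ⟨fun k => ((koszul_step H hU k).extClass.precompOfLinear A M (add_comm 1 i)).comp (θ k),
      ?_, ?_, ?_⟩
    · intro k α
      have := koszul_pd H k i hU'
      obtain ⟨x₁, hx₁⟩ := Abelian.Ext.contravariant_sequence_exact₃ (koszul_step H hU k) M α
        (Abelian.Ext.eq_zero_of_hasProjectiveDimensionLT (X := quo (Jk x k i)) _ (i + 1) le_rfl)
        (add_comm 1 i)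
      obtain ⟨m, rfl⟩ := h1 k x₁
      exact ⟨m, hx₁⟩
    · intro k m
      change (koszul_step H hU k).extClass.comp (θ k m) (add_comm 1 i) = 0 ↔ _
      have hf (m' : M) : (Abelian.Ext.mk₀ (x i ^ k • 𝟙 (quo (Jk x k i)))).comp (θ k m') (zero_add i) =
          θ k (x i ^ k • m') := by
        rw [map_smul]
        exact (pre_smul _ _ _ _ _).trans (congrArg _ (pre_id _ _ _))
      have hm : m ∈ Jk x k (i + 1) • (⊤ : Submodule A M) ↔
          ∃ m', m - x i ^ k • m' ∈ Jk x k i • (⊤ : Submodule A M) := by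
        rw [Jk_succ, mem_ideal_smul_sup]
      refine Iff.trans ?_ hm.symm
      constructor
      · intro h
        obtain ⟨x₂, hx₂⟩ := Abelian.Ext.contravariant_sequence_exact₁ (koszul_step H hU k) M _ _ h
        obtain ⟨m', rfl⟩ := h1 k x₂
        refine ⟨m', ?_⟩
        rw [← h2, map_sub, ← hf, sub_eq_zero]
        exact hx₂.symm
      · rintro ⟨m', hm'⟩
        rw [← h2, map_sub, ← hf, sub_eq_zero] at hm'
        rw [hm']
        exact (koszul_step H hU k).extClass_comp_assoc _
    · intro k l h m
      have hn := ShortComplex.ShortExact.extClass_naturality (koszul_step H hU l) (koszul_step H hU k)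
        (mulSCMap _ _ _ _ (Jk_mono x h i) (Jk_mono x h (i + 1)) (x i ^ (l - k))
          (by rw [← pow_add, Nat.sub_add_cancel h]))
      change (Abelian.Ext.mk₀ (qm (Jk_mono x h (i + 1)))).comp
        ((koszul_step H hU k).extClass.comp (θ k m) (add_comm 1 i)) (zero_add _) =
        (koszul_step H hU l).extClass.comp (θ l _) (add_comm 1 i)
      have h4 : θ l ((∏ j ∈ Finset.range (i + 1), x j) ^ (l - k) • m) =
          pre (x i ^ (l - k) • qm (Jk_mono x h i)) M i (θ k m) := by
        rw [pre_smul, h3 k l h, ← map_smul, Finset.prod_range_succ, smul_smul]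
        ring_nf
      rw [h4]
      have h5 := congrArg (fun z => Abelian.Ext.comp z (θ k m) (add_comm 1 i)) hn
      refine Eq.trans ?_ (h5.symm.trans ?_)
      · exact (Abelian.Ext.comp_assoc _ _ _ (zero_add 1) (add_comm 1 i) (by omega)).symm
      · exact Abelian.Ext.comp_assoc _ _ _ (add_zero 1) (zero_add i) (by omega)

end

/-! ### Top local cohomology as a direct limit of quotients -/

section
variable {A : Type} [CommRing A]

lemma Jk_le_pow (x : ℕ → A) (k t : ℕ) :
    Jk x k t ≤ Ideal.span (x '' (Finset.range t : Set ℕ)) ^ k := by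
  rw [Jk, powIdeal, Ideal.span_le]
  rintro _ ⟨j, hj, rfl⟩
  have h1 : x j ∈ Ideal.span (x '' (Finset.range t : Set ℕ)) := Ideal.subset_span ⟨j, hj, rfl⟩
  exact Ideal.pow_mem_pow h1 k

/-- Together with `Jk_le_pow`: the ideals `(x_j ^ k)` are cofinal with the powers of `(x_j)`. -/
lemma exists_pow_le_Jk (x : ℕ → A) (k t : ℕ) :
    ∃ N, k ≤ N ∧ Ideal.span (x '' (Finset.range t : Set ℕ)) ^ N ≤ Jk x k t := by
  have hfg : (Ideal.span (x '' (Finset.range t : Set ℕ))).FG :=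
    Submodule.fg_span ((Finset.finite_toSet _).image _)
  obtain ⟨N, hN⟩ := Ideal.exists_pow_le_of_le_radical_of_fg (J := Jk x k t) (by
    rw [Ideal.span_le]
    rintro _ ⟨j, hj, rfl⟩
    exact ⟨k, Ideal.subset_span ⟨j, hj, rfl⟩⟩) hfg
  exact ⟨k + N, by omega, (Ideal.pow_le_pow_right (by omega)).trans hN⟩

/-- `H^t_{(x_0, …, x_{t-1})}(M)` is the direct limit of the modules `M / (x_0 ^ k, …, x_{t-1} ^ k) M`
with transition maps multiplication by powers of `x_0 ⋯ x_{t-1}`; `ν k` is the map from (a lift of)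
the `k`-th stage. -/
theorem exists_topMap {x : ℕ → A} {U : Finset ℕ} (H : PermRegular x U) (t : ℕ)
    (hU : Finset.range t ⊆ U) (M : ModuleCat.{0} A) :
    ∃ ν : ∀ _ : ℕ, M →ₗ[A]
        (localCohomology (Ideal.span (x '' (Finset.range t : Set ℕ))) t).obj M,
      (∀ y, ∃ k m, ν k m = y) ∧
      (∀ k l, k ≤ l → ∀ m, ν l ((∏ j ∈ Finset.range t, x j) ^ (l - k) • m) = ν k m) ∧
      (∀ k m, m ∈ Jk x k t • (⊤ : Submodule A M) → ν k m = 0) ∧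
      (∀ k m, ν k m = 0 → ∃ l, k ≤ l ∧
        (∏ j ∈ Finset.range t, x j) ^ (l - k) • m ∈ Jk x l t • (⊤ : Submodule A M)) := by
  set J := Ideal.span (x '' (Finset.range t : Set ℕ)) with hJ
  obtain ⟨ι, i1, i2, i3⟩ := exists_lcMap J t M
  obtain ⟨θ, h1, h2, h3⟩ := koszul_ext H t hU M
  choose N hkN hN using fun k => exists_pow_le_Jk x k t
  -- the choice of a power of `J` inside `L` does not affect the image in the limit
  have indep {L : Ideal A} {a b : ℕ} (ha : J ^ a ≤ L) (hb : J ^ b ≤ L)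
      (z : Abelian.Ext (quo L) M t) : ι a (pre (qm ha) M t z) = ι b (pre (qm hb) M t z) := by
    rw [← i2 a (a + b) (by omega), ← i2 b (a + b) (by omega), pre_comp, pre_comp, qm_comp, qm_comp]
  refine ⟨fun k => ι (N k) ∘ₗ pre (qm (hN k)) M t ∘ₗ θ k, fun y => ?_, fun k l hkl m => ?_,
    fun k m hm => ?_, fun k m hm => ?_⟩
  · obtain ⟨k, z, rfl⟩ := i1 y
    obtain ⟨m, hm⟩ := h1 k (pre (qm (Jk_le_pow x k t)) M t z)
    refine ⟨k, m, ?_⟩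
    simp only [LinearMap.comp_apply, hm]
    rw [pre_comp, qm_comp]
    exact i2 _ _ (hkN k) z
  · simp only [LinearMap.comp_apply]
    rw [← h3 k l hkl, pre_comp, qm_comp]
    exact indep _ _ _
  · simp only [LinearMap.comp_apply]
    rw [(h2 k m).2 hm, map_zero, map_zero]
  · obtain ⟨l, hl, hz⟩ := i3 _ _ hm
    have hkl : k ≤ l := (hkN k).trans hl
    refine ⟨l, hkl, ?_⟩
    rw [← h2, ← h3 k l hkl]
    have h4 := congrArg (pre (qm (Jk_le_pow x l t)) M t) hz
    simp only [LinearMap.comp_apply] at h4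
    rw [map_zero, pre_comp, pre_comp, qm_comp, qm_comp] at h4
    exact h4

end

/-! ### Local cohomology of `A/h^n` as torsion in local cohomology of `A` -/

section
variable {A : Type} [CommRing A]

/-- Two modules exhausted by compatible systems `u`, `w` of maps from `A` with transition maps
multiplication by powers of `p` are isomorphic as soon as the maps have the same kernels: both
modules are the direct limit of the images. -/
lemma equiv_of_systems {X Y : Type} [AddCommGroup X] [Module A X] [AddCommGroup Y] [Module A Y]
    (p : A) (u : ℕ → A →ₗ[A] X) (w : ℕ → A →ₗ[A] Y)
    (hu : ∀ y, ∃ k m, u k m = y) (hw : ∀ y, ∃ k m, w k m = y)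
    (hul : ∀ k l, k ≤ l → ∀ m, u l (p ^ (l - k) * m) = u k m)
    (hwl : ∀ k l, k ≤ l → ∀ m, w l (p ^ (l - k) * m) = w k m)
    (hk : ∀ k a, u k a = 0 ↔ w k a = 0) : Nonempty (X ≃ₗ[A] Y) := by
  -- every finite sum can be rewritten at a single level, the same one for both systems
  have common (c : ℕ →₀ A) : ∃ L a, Finsupp.lsum ℕ u c = u L a ∧ Finsupp.lsum ℕ w c = w L a := by
    induction c using Finsupp.induction_linear with
    | zero => exact ⟨0, 0, by simp, by simp⟩
    | add c d hc hd =>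
      obtain ⟨L, a, h1, h2⟩ := hc
      obtain ⟨L', a', h1', h2'⟩ := hd
      refine ⟨max L L', p ^ (max L L' - L) * a + p ^ (max L L' - L') * a', ?_, ?_⟩
      · rw [map_add, map_add, hul _ _ (le_max_left _ _), hul _ _ (le_max_right _ _), h1, h1']
      · rw [map_add, map_add, hwl _ _ (le_max_left _ _), hwl _ _ (le_max_right _ _), h2, h2']
    | single k a => exact ⟨k, a, by simp, by simp⟩
  obtain ⟨e, -⟩ := exists_equiv_of_surjective (Finsupp.lsum ℕ u) (Finsupp.lsum ℕ w)
    (fun y => by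
      obtain ⟨k, a, rfl⟩ := hu y
      exact ⟨Finsupp.single k a, by simp⟩)
    (fun y => by
      obtain ⟨k, a, rfl⟩ := hw y
      exact ⟨Finsupp.single k a, by simp⟩)
    (fun c => by
      obtain ⟨L, a, h1, h2⟩ := common c
      rw [h1, h2, hk])
  exact ⟨e⟩

/-- The ideal `(x_0 ^ k, …, x_{t-1} ^ k, x_t ^ n)`. -/
abbrev mixIdeal (x : ℕ → A) (t n k : ℕ) : Ideal A :=
  powIdeal x (fun j => if j = t then n else k) (Finset.range (t + 1))

lemma mixIdeal_eq (x : ℕ → A) (t n k : ℕ) :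
    mixIdeal x t n k = Jk x k t ⊔ Ideal.span {x t ^ n} := by
  rw [mixIdeal, Finset.range_add_one, powIdeal_insert, if_pos rfl]
  congr 1
  apply powIdeal_congr
  intro j hj
  rw [if_neg (Finset.mem_range.1 hj).ne]

lemma mixIdeal_self (x : ℕ → A) (t k : ℕ) : mixIdeal x t k k = Jk x k (t + 1) :=
  powIdeal_congr x fun j _ => by simp

/-- Multiplication by `p ^ c * h ^ d`, with `f = x_0, …, x_{t-1}`, `p = x_0 ⋯ x_{t-1}` and `h = x_t`
(notation used from here on), induces an injection `A / (f ^ k, h ^ n) → A / (f ^ (k + c), h ^ (n + d))`. -/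
lemma mul_mem_mixIdeal {x : ℕ → A} {t : ℕ} (H : PermRegular x (Finset.range (t + 1)))
    (n k c d : ℕ) (a : A) :
    (∏ j ∈ Finset.range t, x j) ^ c * x t ^ d * a ∈ mixIdeal x t (n + d) (k + c) ↔
      a ∈ mixIdeal x t n k := by
  constructor
  · intro ha
    refine H.colon _ (fun j => if j = t then d else c) subset_rfl (Finset.range (t + 1)) subset_rfl
      a ?_
    have h1 : ∏ j ∈ Finset.range (t + 1), x j ^ (if j = t then d else c) =
        (∏ j ∈ Finset.range t, x j) ^ c * x t ^ d := by
      rw [Finset.prod_range_succ, if_pos rfl, ← Finset.prod_pow]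
      congr 1
      refine Finset.prod_congr rfl fun j hj => ?_
      rw [if_neg (Finset.mem_range.1 hj).ne]
    rw [h1]
    convert ha using 1
    apply powIdeal_congr
    intro j hj
    rw [if_pos hj]
    split_ifs <;> rfl
  · intro ha
    have h1 : mixIdeal x t n k ≤ Submodule.comap
        (LinearMap.mulLeft A ((∏ j ∈ Finset.range t, x j) ^ c * x t ^ d))
        (mixIdeal x t (n + d) (k + c)) := by
      rw [mixIdeal, powIdeal, Ideal.span_le]
      rintro _ ⟨j, hj, rfl⟩
      have hm : x j ^ (if j = t then n + d else k + c) ∈ mixIdeal x t (n + d) (k + c) :=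
        Ideal.subset_span ⟨j, hj, rfl⟩
      refine Ideal.mem_of_dvd (mixIdeal x t (n + d) (k + c)) ?_ hm
      simp only [LinearMap.mulLeft_apply]
      split_ifs with hjt
      · subst hjt
        exact ⟨(∏ j ∈ Finset.range j, x j) ^ c, by ring⟩
      · have hjt' : j ∈ Finset.range t := by
          have := Finset.mem_range.1 (Finset.mem_coe.1 hj)
          exact Finset.mem_range.2 (by omega)
        obtain ⟨r, hr⟩ := Finset.dvd_prod_of_mem x hjt'
        rw [hr]
        exact ⟨r ^ c * x t ^ d, by ring⟩
    exact h1 ha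

/-- The description of `N_n = H^t_f(A/h^n)` as a limit of the modules `A / (f ^ k, h ^ n)` along
injections. -/
lemma exists_quoSystem {x : ℕ → A} {t : ℕ} (H : PermRegular x (Finset.range (t + 1))) (n : ℕ) :
    ∃ u : ∀ _ : ℕ, A →ₗ[A] (localCohomology (Ideal.span (x '' (Finset.range t : Set ℕ))) t).obj
        (ModuleCat.of A (A ⧸ Ideal.span {x t ^ n})),
      (∀ y, ∃ k a, u k a = y) ∧
      (∀ k l, k ≤ l → ∀ a, u l ((∏ j ∈ Finset.range t, x j) ^ (l - k) * a) = u k a) ∧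
      (∀ k a, u k a = 0 ↔ a ∈ mixIdeal x t n k) := by
  obtain ⟨ν, h1, h2, h3, h4⟩ := exists_topMap H t
    (Finset.range_subset_range.2 (Nat.le_succ t)) (ModuleCat.of A (A ⧸ Ideal.span {x t ^ n}))
  let π : A →ₗ[A] ModuleCat.of A (A ⧸ Ideal.span {x t ^ n}) := Submodule.mkQ _
  have hπ : Function.Surjective π := Submodule.mkQ_surjective _
  have hmem (k : ℕ) (a : A) : π a ∈ Jk x k t • (⊤ : Submodule A
      (ModuleCat.of A (A ⧸ Ideal.span {x t ^ n}))) ↔ a ∈ mixIdeal x t n k := by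
    have e1 : Jk x k t • (⊤ : Submodule A (ModuleCat.of A (A ⧸ Ideal.span {x t ^ n}))) =
        Submodule.map π (Jk x k t) := by
      rw [← LinearMap.range_eq_top.2 hπ, LinearMap.range_eq_map, ← Submodule.map_smul'']
      simp
    have e2 : LinearMap.ker π = Ideal.span {x t ^ n} := Submodule.ker_mkQ _
    rw [e1, ← Submodule.mem_comap, Submodule.comap_map_eq, e2, mixIdeal_eq]
  refine ⟨fun k => ν k ∘ₗ π, fun y => ?_, fun k l hkl a => ?_, fun k a => ⟨fun h0 => ?_, fun h0 => ?_⟩⟩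
  · obtain ⟨k, m, rfl⟩ := h1 y
    obtain ⟨a, rfl⟩ := hπ m
    exact ⟨k, a, rfl⟩
  · change ν l (π (_ * a)) = ν k (π a)
    rw [← h2 k l hkl, ← smul_eq_mul, map_smul]
  · obtain ⟨l, hl, h5⟩ := h4 _ _ h0
    rw [← map_smul, hmem, smul_eq_mul] at h5
    refine (mul_mem_mixIdeal H n k (l - k) 0 a).1 ?_
    rw [pow_zero, mul_one, add_zero, Nat.add_sub_cancel' hl]
    exact h5
  · exact h3 _ _ ((hmem k a).2 h0)

/-- The description of `N = H^{t+1}_{(f,h)}(A)` as a limit of the modules `A / (f ^ k, h ^ k)`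
along injections. -/
lemma exists_ringSystem {x : ℕ → A} {t : ℕ} (H : PermRegular x (Finset.range (t + 1))) :
    ∃ v : ∀ _ : ℕ, A →ₗ[A]
        (localCohomology (Ideal.span (x '' (Finset.range (t + 1) : Set ℕ))) (t + 1)).obj
          (ModuleCat.of A A),
      (∀ y, ∃ k a, v k a = y) ∧
      (∀ k l, k ≤ l → ∀ a,
        v l ((∏ j ∈ Finset.range t, x j) ^ (l - k) * x t ^ (l - k) * a) = v k a) ∧
      (∀ k a, v k a = 0 ↔ a ∈ mixIdeal x t k k) := by
  obtain ⟨ν, h1, h2, h3, h4⟩ := exists_topMap H (t + 1) subset_rfl (ModuleCat.of A A)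
  have hmem (k : ℕ) (a : A) : a ∈ Jk x k (t + 1) • (⊤ : Submodule A (ModuleCat.of A A)) ↔
      a ∈ mixIdeal x t k k := by
    rw [mixIdeal_self]
    have : Jk x k (t + 1) • (⊤ : Submodule A (ModuleCat.of A A)) = Jk x k (t + 1) :=
      Ideal.mul_top _
    rw [this]
  refine ⟨ν, h1, fun k l hkl a => ?_, fun k a => ⟨fun h0 => ?_, fun h0 => ?_⟩⟩
  · refine Eq.trans ?_ (h2 k l hkl a)
    congr 1
    rw [Finset.prod_range_succ, mul_pow]
    rfl
  · obtain ⟨l, hl, h5⟩ := h4 _ _ h0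
    have h6 := (hmem l _).1 h5
    refine (mul_mem_mixIdeal H k k (l - k) (l - k) a).1 ?_
    rw [Nat.add_sub_cancel' hl, ← mul_pow, ← Finset.prod_range_succ]
    exact h6
  · exact h3 _ _ ((hmem k a).2 h0)

/-- `H^t_f(A/h^n)` is isomorphic to the `h ^ n`-torsion submodule of `H^{t+1}_{(f,h)}(A)`, and the
latter module is `h`-power torsion and `h`-divisible. -/
lemma exists_torsion_model {x : ℕ → A} {t : ℕ} (H : PermRegular x (Finset.range (t + 1)))
    {N : ModuleCat.{0} A}
    (hN : N = (localCohomology (Ideal.span (x '' (Finset.range (t + 1) : Set ℕ))) (t + 1)).obj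
      (ModuleCat.of A A)) :
    (∀ y : N, ∃ k, x t ^ k • y = 0) ∧ (∀ y : N, ∃ z, x t • z = y) ∧
    ∀ n, Nonempty ((localCohomology (Ideal.span (x '' (Finset.range t : Set ℕ))) t).obj
        (ModuleCat.of A (A ⧸ Ideal.span {x t ^ n})) ≃ₗ[A]
      LinearMap.ker (LinearMap.lsmul A N (x t ^ n))) := by
  subst hN
  obtain ⟨v, v1, v2, v3⟩ := exists_ringSystem H
  set p := ∏ j ∈ Finset.range t, x j with hp
  have htors (k : ℕ) (a : A) : x t ^ k • v k a = 0 := by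
    rw [← map_smul, v3, mixIdeal_eq]
    exact Ideal.mem_sup_right (Ideal.mul_mem_right _ _ (Ideal.mem_span_singleton_self _))
  refine ⟨fun y => ?_, fun y => ?_, fun n => ?_⟩
  · obtain ⟨k, a, rfl⟩ := v1 y
    exact ⟨k, htors k a⟩
  · obtain ⟨k, a, rfl⟩ := v1 y
    refine ⟨v (k + 1) (p * a), ?_⟩
    rw [← v2 k (k + 1) (by omega), ← map_smul, Nat.add_sub_cancel_left, pow_one, pow_one,
      smul_eq_mul]
    congr 1
    ring
  obtain ⟨u, u1, u2, u3⟩ := exists_quoSystem H n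
  -- the class of `a` at level `k` of the first system goes to that of `p ^ n * h ^ k * a`
  -- at level `k + n` of the second
  let w (k : ℕ) : A →ₗ[A] LinearMap.ker (LinearMap.lsmul A
      ((localCohomology (Ideal.span (x '' (Finset.range (t + 1) : Set ℕ))) (t + 1)).obj
        (ModuleCat.of A A)) (x t ^ n)) :=
    (v (k + n) ∘ₗ LinearMap.mulLeft A (p ^ n * x t ^ k)).codRestrict _ fun a => by
      rw [LinearMap.mem_ker]
      change x t ^ n • v (k + n) (p ^ n * x t ^ k * a) = 0
      rw [← map_smul, smul_eq_mul,
        show x t ^ n * (p ^ n * x t ^ k * a) = x t ^ (k + n) * (p ^ n * a) by ring,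
        ← smul_eq_mul, map_smul]
      exact htors _ _
  have hw (k : ℕ) (a : A) : (w k a : _) = v (k + n) (p ^ n * x t ^ k * a) := rfl
  refine equiv_of_systems p u w u1 (fun y => ?_) u2 (fun k l hkl a => ?_) fun k a => ?_
  · obtain ⟨y, hy⟩ := y
    obtain ⟨k, a, rfl⟩ := v1 y
    have hy' : x t ^ n • v k a = 0 := hy
    -- pass to a level which is at least `n`
    rw [← v2 k (k + n) (by omega), Nat.add_sub_cancel_left] at hy'
    set b := p ^ n * x t ^ n * a with hb
    rw [← map_smul, v3, smul_eq_mul] at hy'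
    have h5 : b ∈ mixIdeal x t k (k + n) := by
      refine (mul_mem_mixIdeal H k (k + n) 0 n b).1 ?_
      simpa using hy'
    rw [mixIdeal_eq, mem_sup_span_singleton] at h5
    obtain ⟨d, hd⟩ := h5
    have h6 : v (k + n) b = v (k + n) (x t ^ k * d) := by
      rw [← sub_eq_zero, ← map_sub, v3, mixIdeal_eq]
      exact Ideal.mem_sup_left hd
    refine ⟨k + n, d, Subtype.ext ?_⟩
    rw [hw]
    change _ = v k a
    rw [← v2 k (k + n) (by omega), Nat.add_sub_cancel_left, ← hb, h6,
      ← v2 (k + n) (k + n + n) (by omega), Nat.add_sub_cancel_left]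
    congr 1
    ring
  · apply Subtype.ext
    rw [hw, hw, ← v2 (k + n) (l + n) (by omega)]
    obtain ⟨c, rfl⟩ := Nat.exists_eq_add_of_le hkl
    rw [show k + c + n - (k + n) = c by omega, show k + c - k = c by omega]
    congr 1
    ring
  · rw [u3, ← Submodule.coe_eq_zero, hw, v3, ← mul_mem_mixIdeal H n k n k a, add_comm n k]

/-- The induction along `0 → N[h] → N[h ^ (n+1)] → N[h ^ n] → 0`, where `N[r]` denotes
the `r`-torsion of an `h`-divisible module `N`. -/
lemma LCTorsion.torsion_pow {S : Submonoid A} {J : Ideal A} {δ : ℕ} {N : ModuleCat.{0} A} (h : A)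
    (hdiv : ∀ y : N, ∃ z, h • z = y)
    (h1 : LCTorsion S J δ (ModuleCat.of A (LinearMap.ker (LinearMap.lsmul A N (h ^ 1))))) (n : ℕ) :
    LCTorsion S J δ (ModuleCat.of A (LinearMap.ker (LinearMap.lsmul A N (h ^ (n + 1))))) := by
  induction n with
  | zero => exact h1
  | succ n ih =>
    have hi : LinearMap.ker (LinearMap.lsmul A N (h ^ 1)) ≤
        LinearMap.ker (LinearMap.lsmul A N (h ^ (n + 1 + 1))) := by
      intro y hy
      have hy' : h ^ 1 • y = 0 := hy
      change h ^ (n + 1 + 1) • y = 0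
      rw [pow_succ, mul_smul]
      rw [pow_one] at hy'
      rw [hy', smul_zero]
    have hg : ∀ y : LinearMap.ker (LinearMap.lsmul A N (h ^ (n + 1 + 1))),
        h • (y : N) ∈ LinearMap.ker (LinearMap.lsmul A N (h ^ (n + 1))) := by
      rintro ⟨y, hy⟩
      have hy' : h ^ (n + 1 + 1) • y = 0 := hy
      change h ^ (n + 1) • h • y = 0
      rwa [← mul_smul, ← pow_succ]
    let g : LinearMap.ker (LinearMap.lsmul A N (h ^ (n + 1 + 1))) →ₗ[A]
        LinearMap.ker (LinearMap.lsmul A N (h ^ (n + 1))) :=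
      (LinearMap.lsmul A N h ∘ₗ Submodule.subtype _).codRestrict _ hg
    have hgv (y) : ((g y : _) : N) = h • (y : N) := rfl
    let T : ShortComplex (ModuleCat.{0} A) := ShortComplex.mk
      (ModuleCat.ofHom (Submodule.inclusion hi)) (ModuleCat.ofHom g) (by
        ext y
        obtain ⟨y, hy⟩ := y
        have hy' : h ^ 1 • y = 0 := hy
        rw [pow_one] at hy'
        exact hy')
    have hT : T.ShortExact := by
      refine ShortComplex.ShortExact.mk' ?_ ?_ ?_
      · rw [ShortComplex.moduleCat_exact_iff]
        intro y hy
        have hy1 : h • (y : LinearMap.ker (LinearMap.lsmul A N (h ^ (n + 1 + 1)))).1 = 0 :=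
          congrArg Subtype.val hy
        have hy2 : h ^ 1 • y.1 = 0 := by rwa [pow_one]
        exact ⟨⟨y.1, hy2⟩, rfl⟩
      · exact (ModuleCat.mono_iff_injective _).2 (Submodule.inclusion_injective hi)
      · refine (ModuleCat.epi_iff_surjective _).2 ?_
        rintro ⟨y, hy⟩
        obtain ⟨z, rfl⟩ := hdiv y
        have hz : h ^ (n + 1 + 1) • z = 0 := by
          rw [pow_succ, mul_smul]
          exact hy
        exact ⟨⟨z, hz⟩, rfl⟩
    exact LCTorsion.middle hT h1 ih

variable [IsNoetherianRing A]

/-- If every element of `H^δ_J(H^t_f(A/h))` is killed by an element of `S`, then the same holds for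
`A/h^n`, `n ≥ 1`, and for `H^{t+1}_{(f,h)}(A)`. -/
lemma LCTorsion.main {x : ℕ → A} {t : ℕ} (H : PermRegular x (Finset.range (t + 1)))
    (S : Submonoid A) (J : Ideal A) (δ : ℕ)
    (h1 : LCTorsion S J δ ((localCohomology (Ideal.span (x '' (Finset.range t : Set ℕ))) t).obj
        (ModuleCat.of A (A ⧸ Ideal.span {x t})))) :
    (∀ n, 1 ≤ n → LCTorsion S J δ
      ((localCohomology (Ideal.span (x '' (Finset.range t : Set ℕ))) t).obj
        (ModuleCat.of A (A ⧸ Ideal.span {x t ^ n})))) ∧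
    LCTorsion S J δ
      ((localCohomology (Ideal.span (x '' (Finset.range (t + 1) : Set ℕ))) (t + 1)).obj
        (ModuleCat.of A A)) := by
  obtain ⟨m1, m2, m3⟩ := exists_torsion_model H rfl
  have hn := LCTorsion.torsion_pow (S := S) (J := J) (δ := δ) (x t) m2 (by
    refine LCTorsion.of_iso (LinearEquiv.toModuleIso (m3 1).some) ?_
    rw [pow_one]
    exact h1)
  refine ⟨fun n hn1 => ?_, ?_⟩
  · obtain ⟨n, rfl⟩ := Nat.exists_eq_add_of_le' hn1
    exact LCTorsion.of_iso (LinearEquiv.toModuleIso (m3 (n + 1)).some.symm) (hn n)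
  · have mono : ∀ k l, k ≤ l → ∀ y : (localCohomology (Ideal.span (x ''
        (Finset.range (t + 1) : Set ℕ))) (t + 1)).obj (ModuleCat.of A A), x t ^ k • y = 0 → x t ^ l • y = 0 := by
      intro k l hkl y hy
      rw [← Nat.sub_add_cancel hkl, pow_add, mul_smul]
      rw [hy, smul_zero]
    refine LCTorsion.union (fun n => LinearMap.ker (LinearMap.lsmul A _ (x t ^ (n + 1))))
      (fun k l hkl y hy => mono (k + 1) (l + 1) (by omega) y hy) (fun y => ?_) hn
    obtain ⟨k, hk⟩ := m1 y
    exact ⟨k, mono k (k + 1) (by omega) y hk⟩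

end

/-! ### Passage to families indexed by natural numbers -/

section
variable {A : Type} [CommRing A]

lemma image_extZero {n : ℕ} (g : Fin n → A) :
    extZero g '' (Finset.range n : Set ℕ) = Set.range g := by
  ext r
  constructor
  · rintro ⟨k, hk, rfl⟩
    have hk' : k < n := Finset.mem_range.1 hk
    exact ⟨⟨k, hk'⟩, by simp [extZero, hk']⟩
  · rintro ⟨k, rfl⟩
    exact ⟨k, by simp, by simp [extZero]⟩

lemma extZero_snoc_last {t : ℕ} (f : Fin t → A) (h : A) :
    extZero (Fin.snoc f h : Fin (t + 1) → A) t = h := by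
  simp [extZero, Fin.snoc]

lemma image_extZero_snoc {t : ℕ} (f : Fin t → A) (h : A) :
    extZero (Fin.snoc f h : Fin (t + 1) → A) '' (Finset.range t : Set ℕ) = Set.range f := by
  rw [← image_extZero f]
  refine Set.image_congr fun k hk => ?_
  have hk' : k < t := Finset.mem_range.1 hk
  simp [extZero, Fin.snoc, hk', hk'.trans (Nat.lt_succ_self t)]

end

end

/-- Let `A` be Noetherian, `f 0, …, f (t-1), h` a permutable regular
sequence, and `I ⊇ (f, h)` an ideal; fix `δ ≥ 0`.  If `H^δ_I(H^t_{(f)}(A/hA)) = 0`, then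
`H^δ_I(H^t_{(f)}(A/h^n A)) = 0` for all `n ≥ 1` and `H^δ_I(H^{t+1}_{(f,h)}(A)) = 0`.
In particular, `Supp H^δ_I(H^{t+1}_{(f,h)}(A)) ⊆ Supp H^δ_I(H^t_{(f)}(A/hA))`. -/
theorem statement16 (A : Type) [CommRing A] [IsNoetherianRing A]
    (t : ℕ) (f : Fin t → A) (h : A)
    (hperm : ∀ σ : Equiv.Perm (Fin (t + 1)),
      RingTheory.Sequence.IsRegular A (List.ofFn ((Fin.snoc f h : Fin (t + 1) → A) ∘ σ)))
    (I : Ideal A) (hI : Ideal.span (Set.range (Fin.snoc f h : Fin (t + 1) → A)) ≤ I)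
    (δ : ℕ) :
    ((Subsingleton ↥((localCohomology I δ).obj
          ((localCohomology (Ideal.span (Set.range f)) t).obj
            (ModuleCat.of A (A ⧸ Ideal.span {h})))) →
        (∀ n : ℕ, 1 ≤ n →
          Subsingleton ↥((localCohomology I δ).obj
            ((localCohomology (Ideal.span (Set.range f)) t).obj
              (ModuleCat.of A (A ⧸ Ideal.span {h ^ n}))))) ∧
        Subsingleton ↥((localCohomology I δ).obj
          ((localCohomology (Ideal.span (Set.range (Fin.snoc f h : Fin (t + 1) → A)))
              (t + 1)).obj (ModuleCat.of A A)))))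
    ∧ Module.support A
        ↥((localCohomology I δ).obj
          ((localCohomology (Ideal.span (Set.range (Fin.snoc f h : Fin (t + 1) → A)))
              (t + 1)).obj (ModuleCat.of A A)))
      ⊆ Module.support A
          ↥((localCohomology I δ).obj
            ((localCohomology (Ideal.span (Set.range f)) t).obj
              (ModuleCat.of A (A ⧸ Ideal.span {h})))) := by
  set x := extZero (Fin.snoc f h : Fin (t + 1) → A) with hx
  have H : PermRegular x (Finset.range (t + 1)) := permRegular_extZero _ hperm
  have hxt : x t = h := extZero_snoc_last f h
  have hJ : Ideal.span (Set.range f) = Ideal.span (x '' (Finset.range t : Set ℕ)) := by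
    rw [hx, image_extZero_snoc]
  have hJ' : Ideal.span (Set.range (Fin.snoc f h : Fin (t + 1) → A)) =
      Ideal.span (x '' (Finset.range (t + 1) : Set ℕ)) := by
    rw [hx, image_extZero]
  clear_value x
  rw [hJ, hJ']
  subst hxt
  have bot (M : ModuleCat.{0} A) :
      LCTorsion ⊥ I δ M ↔ Subsingleton ↥((localCohomology I δ).obj M) := by
    rw [lcTorsion_iff]
    constructor
    · refine fun hT => subsingleton_of_forall_eq 0 fun y => ?_
      obtain ⟨s, hs, hy⟩ := hT y
      rwa [Submonoid.mem_bot.1 hs, one_smul] at hy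
    · intro hT y
      exact ⟨1, Submonoid.one_mem _, Subsingleton.elim _ _⟩
  refine ⟨fun h1 => ?_, fun P hP => ?_⟩
  · obtain ⟨h2, h3⟩ := LCTorsion.main H ⊥ I δ ((bot _).2 h1)
    exact ⟨fun n hn => (bot _).1 (h2 n hn), (bot _).1 h3⟩
  · -- outside the support every element is killed by an element of the complement of `P`
    by_contra hP'
    rw [Module.notMem_support_iff'] at hP'
    refine (Module.notMem_support_iff'.2 ?_) hP
    exact (lcTorsion_iff P.asIdeal.primeCompl I δ _).1
      (LCTorsion.main H _ I δ ((lcTorsion_iff P.asIdeal.primeCompl I δ _).2 hP')).2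
end
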